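/- arXiv:1203.6552 — 5 statements merged into one kernel-verified Lean document; each statement's English description precedes it below -/
import Mathlib

section
/- Let K be a finite field of characteristic ℓ ≥ 5, V a symplectic K-vector space of dimension n, and G a subgroup of GSp(V) which contains a nontrivial symplectic transvection. Then the following are equivalent: (i) G contains a conjugate (in GSp(V)) of Sp_n(F_ℓ), where F_ℓ ⊆ K is the prime field; (ii) there is a subfield L of K such that the subgroup generated by the symplectic transvections of G is conjugate in GSp(V) to Sp_n(L). -/
/-! The implication from (ii) to (i) is immediate, since `Sp_n(𝔽_ℓ) ⊆ Sp_n(L)`. For the converse,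
after conjugating, `G` contains `Sp_n(𝔽_ℓ)` in a symplectic basis `b`, and only the elements of
multiplier one matter. One shows that for some subfield `L` the transvections in `G` are exactly
those of `Sp_n(L)`, and that these generate `Sp_n(L)` (`Huge.SpL_le`).

The field `L`. The elements of `G` acting on a hyperbolic plane and trivially on its complement
form a subgroup of `SL₂(K)` (`Huge.pp_isSL2`). For a subgroup of `SL₂(K)` let `U` be the additive
group of its upper unipotent elements and `D` the group of first entries of its upper triangular
elements. If the subgroup is not upper triangular, mapping a first column `v` and `u ∈ U` to the
first column of `g u g⁻¹`, where `g` has first column `v`, gives a map with fibres of size at most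
`|D|`, so `|U| ≤ |D| + 1` (`IsSL2.card_U_le`). The subring generated by the squares of `D` lies in
`U` and has more than half its size; as orders are odd, `U` is this subring, hence a subfield
(`IsSL2.exists_subfield`).

All rational transvections lie in `G`. Moving by `Sp_n(𝔽_ℓ)`, every nonzero prime-field vector has
the same parameter set `L`; combining transvections along `v`, `w`, `v + w` extends this to the
`L`-span of `b` (`Huge.tr_of_VL`).

All transvections in `G` are rational. In `SL₂`, a subgroup whose upper unipotents are those over
`L` and which contains the lower unipotents over `L` has all its elements of trace two in `SL₂(L)`
(`IsSL2.mem_of_trace_two`). If `D ⊆ L` this follows from the equality case of the counting map; if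
not, `-1` is a square in `D` and a count of elements of trace zero shows that all slopes of first
columns are in `L` (`IsSL2.bad_empty`). In general, let `x` be the axis of a transvection in `G`
and `e` a basis vector not orthogonal to `x`. A torus element in the plane of `e` and `x`
(`IsSL2.exists_torus`) moves rational transvections to others, and comparing parameters along `e`
shows that, modulo `e` and after scaling, `x` is rational; this reduces to the planar case
(`Huge.tr_rational`). -/

open Module

variable {K : Type*} [Field K] {V : Type*} [AddCommGroup V] [Module K V]

/-- `A ∈ GSp(V, ω)`: there is a multiplier `α ∈ Kˣ` with `ω (A v) (A w) = α * ω v w`. -/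
def IsGSp (ω : LinearMap.BilinForm K V) (A : V ≃ₗ[K] V) : Prop :=
  ∃ α : Kˣ, ∀ v w : V, ω (A v) (A w) = (α : K) * ω v w

/-- `A ∈ Sp(V, ω)`: `A` preserves the form. -/
def IsSp (ω : LinearMap.BilinForm K V) (A : V ≃ₗ[K] V) : Prop :=
  ∀ v w : V, ω (A v) (A w) = ω v w

/-- `τ` is a transvection (possibly trivial): there is a line `K•u` containing
`τ v - v` for every `v`; for `τ ≠ 1` this is equivalent to `rank (τ - id) = 1`
together with the line condition. -/
def IsTransvection (τ : V ≃ₗ[K] V) : Prop :=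
  ∃ u : V, ∀ v : V, ∃ c : K, τ v - v = c • u

/-- A symplectic transvection is a transvection lying in `Sp(V, ω)`. -/
def IsSymplecticTransvection (ω : LinearMap.BilinForm K V) (τ : V ≃ₗ[K] V) : Prop :=
  IsTransvection τ ∧ IsSp ω τ

/-- A basis indexed by `Fin m ⊕ Fin m` is symplectic for `ω` if its Gram matrix is the
standard symplectic matrix `J`. -/
def IsSymplecticBasis (ω : LinearMap.BilinForm K V) {m : ℕ} (b : Basis (Fin m ⊕ Fin m) K V) :
    Prop :=
  (∀ i j, ω (b (Sum.inl i)) (b (Sum.inl j)) = 0) ∧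
  (∀ i j, ω (b (Sum.inr i)) (b (Sum.inr j)) = 0) ∧
  (∀ i j, ω (b (Sum.inl i)) (b (Sum.inr j)) = (if i = j then (1 : K) else 0))

/-- `Sp_n(L)`: the elements of `Sp(V, ω)` whose matrix in the fixed (symplectic) basis `b`
has all entries in the subfield `L` of `K`. -/
def SpL (ω : LinearMap.BilinForm K V) {m : ℕ} (b : Basis (Fin m ⊕ Fin m) K V) (L : Subfield K) :
    Set (V ≃ₗ[K] V) :=
  {g | IsSp ω g ∧ ∀ i j, LinearMap.toMatrix b b (g : V →ₗ[K] V) i j ∈ L}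

/-- The symplectic transvection `T_v[c] : u ↦ u + c ⟨u, v⟩ v`, as a linear map. -/
def Tmap (ω : LinearMap.BilinForm K V) (v : V) (c : K) : V →ₗ[K] V :=
  LinearMap.id + c • (ω.flip v).smulRight v

/-! ### Subgroups of `SL₂` over a finite field -/

/-- `P a b c d` is read as "the matrix `!![a, b; c, d]` belongs to a given subgroup of `SL₂(K)`";
`IsSL2 P` says that `P` is the membership predicate of a subgroup of `SL₂(K)`. A predicate on
entries is used because the planes of a larger symplectic space give such subgroups directly. -/
structure IsSL2 {K : Type*} [Field K] (P : K → K → K → K → Prop) : Prop where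
  det : ∀ {a b c d}, P a b c d → a * d - b * c = 1
  one : P 1 0 0 1
  mul : ∀ {a b c d a' b' c' d'}, P a b c d → P a' b' c' d' →
    P (a * a' + b * c') (a * b' + b * d') (c * a' + d * c') (c * b' + d * d')
  inv : ∀ {a b c d}, P a b c d → P d (-b) (-c) a

namespace IsSL2
variable {K : Type*} [Field K] {P : K → K → K → K → Prop}

omit [Field K] in
theorem congr {a b c d a' b' c' d' : K} (h : P a b c d) (ha : a = a') (hb : b = b')
    (hc : c = c') (hd : d = d') : P a' b' c' d' := by
  subst ha hb hc hd; exact h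

/-- Two elements with the same first column differ by an upper unipotent element. -/
theorem stab (hP : IsSL2 P) {a b c d b' d' : K} (h : P a b c d) (h' : P a b' c d') :
    ∃ t, P 1 t 0 1 ∧ b' = b + a * t ∧ d' = d + c * t := by
  have e := hP.det h
  have e' := hP.det h'
  refine ⟨d * b' - b * d', congr (hP.mul (hP.inv h) h') ?_ ?_ ?_ ?_, ?_, ?_⟩
  · linear_combination e
  · ring
  · ring
  · linear_combination e'
  · linear_combination (-b') * e + b * e'
  · linear_combination (-d') * e + d * e'

/-- Two elements with proportional first columns differ by an upper triangular element whose
first entry is the factor of proportionality. -/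
theorem ratio (hP : IsSL2 P) {a b c d b' d' s : K} (h : P a b c d)
    (h' : P (s * a) b' (s * c) d') : ∃ b d, P s b 0 d := by
  have e := hP.det h
  refine ⟨_, _, congr (hP.mul (hP.inv h) h') ?_ rfl ?_ rfl⟩
  · linear_combination s * e
  · ring

/-- The conjugate `g !![1, u; 0, 1] g⁻¹`, which depends only on `u` and the first column of `g`. -/
theorem conjX (hP : IsSL2 P) {a b c d u : K} (h : P a b c d) (hu : P 1 u 0 1) :
    P (1 - u * c * a) (u * a * a) (-(u * c * c)) (1 + u * c * a) := by
  have e := hP.det h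
  refine congr (hP.mul (hP.mul h hu) (hP.inv h)) ?_ ?_ ?_ ?_
  · linear_combination e
  · ring
  · ring
  · linear_combination e

variable [Fintype K]
open Classical in
/-- The upper unipotent elements, recorded by their off-diagonal entry. -/
noncomputable def U (P : K → K → K → K → Prop) : Finset K := Finset.univ.filter fun t => P 1 t 0 1
open Classical in
/-- The first diagonal entries of the upper triangular elements. -/
noncomputable def D (P : K → K → K → K → Prop) : Finset K :=
  Finset.univ.filter fun a => ∃ b d, P a b 0 d
open Classical in
/-- The first columns `(a, c)` with `c ≠ 0`: the orbit of the first basis vector, outside its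
line. -/
noncomputable def O (P : K → K → K → K → Prop) : Finset (K × K) :=
  Finset.univ.filter fun v => v.2 ≠ 0 ∧ ∃ b d, P v.1 b v.2 d

@[simp] theorem mem_U {t : K} : t ∈ U P ↔ P 1 t 0 1 := by simp [U]
@[simp] theorem mem_D {a : K} : a ∈ D P ↔ ∃ b d, P a b 0 d := by simp [D]
@[simp] theorem mem_O {v : K × K} : v ∈ O P ↔ v.2 ≠ 0 ∧ ∃ b d, P v.1 b v.2 d := by simp [O]

/-- `Phi (v, u)` is the first column of `g !![1, u; 0, 1] g⁻¹`, where `v` is the first column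
of `g`. -/
def Phi (p : (K × K) × K) : K × K := (1 - p.2 * p.1.2 * p.1.1, -(p.2 * p.1.2 * p.1.2))

theorem Phi_mem (hP : IsSL2 P) [DecidableEq K] {p : (K × K) × K} (hp : p ∈ O P ×ˢ (U P).erase 0) :
    Phi p ∈ O P := by
  obtain ⟨⟨a, c⟩, u⟩ := p
  simp only [Finset.mem_product, mem_O, Finset.mem_erase, mem_U] at hp
  obtain ⟨⟨hc, b, d, h⟩, hu, hU⟩ := hp
  simp only [mem_O, Phi]
  refine ⟨by simp [hc, hu], _, _, hP.conjX h hU⟩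

/-- On a fibre of `Phi` the vector `v` is determined up to a factor in `D`, and `v` then
determines `u`. -/
theorem Phi_fiber (hP : IsSL2 P) [DecidableEq K] (z : K × K) :
    (((O P ×ˢ (U P).erase 0)).filter fun p => Phi p = z).card ≤ (D P).card := by
  rcases (((O P ×ˢ (U P).erase 0)).filter fun p => Phi p = z).eq_empty_or_nonempty with h0 | ⟨q, hq⟩
  · simp [h0]
  obtain ⟨⟨a₀, c₀⟩, u₀⟩ := q
  simp only [Finset.mem_filter, Finset.mem_product, mem_O, Finset.mem_erase, mem_U] at hq
  obtain ⟨⟨⟨hc₀, b₀, d₀, h₀⟩, hu₀, hU₀⟩, hz₀⟩ := hq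
  have key : ∀ p ∈ ((O P ×ˢ (U P).erase 0)).filter fun p => Phi p = z,
      p.1.2 ≠ 0 ∧ p.1.1 = p.1.2 / c₀ * a₀ ∧ p.2 = u₀ / (p.1.2 / c₀) ^ 2 ∧
        ∃ b d, P p.1.1 b p.1.2 d := by
    rintro ⟨⟨a, c⟩, u⟩ hp
    simp only [Finset.mem_filter, Finset.mem_product, mem_O, Finset.mem_erase, mem_U] at hp
    obtain ⟨⟨⟨hc, b, d, h⟩, hu, hU⟩, hz⟩ := hp
    rw [← hz₀] at hz
    simp only [Phi, Prod.mk.injEq] at hz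
    obtain ⟨e1, e2⟩ := hz
    have e2' : u * c * c = u₀ * c₀ * c₀ := by linear_combination -e2
    have e1' : u * c * a = u₀ * c₀ * a₀ := by linear_combination -e1
    refine ⟨hc, ?_, ?_, b, d, h⟩
    · have : u * c ≠ 0 := mul_ne_zero hu hc
      simp only
      rw [div_mul_eq_mul_div, eq_div_iff hc₀]
      apply mul_left_cancel₀ this
      linear_combination c₀ * e1' - a₀ * e2'
    · simp only
      field_simp
      linear_combination e2'
  apply Finset.card_le_card_of_injOn (fun p => p.1.2 / c₀)
  · intro p hp
    obtain ⟨hc, ha, -, b, d, h⟩ := key p (by simpa using hp)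
    have : p.1.2 = p.1.2 / c₀ * c₀ := by field_simp
    rw [ha] at h
    have h' : P (p.1.2 / c₀ * a₀) b (p.1.2 / c₀ * c₀) d := by rwa [← this]
    simpa using hP.ratio h₀ h'
  · intro p hp p' hp' he
    obtain ⟨hc, ha, hu, -⟩ := key p (by simpa using hp)
    obtain ⟨hc', ha', hu', -⟩ := key p' (by simpa using hp')
    simp only at he
    refine Prod.ext (Prod.ext ?_ ?_) ?_
    · rw [ha, ha', he]
    · field_simp at he; exact he
    · rw [hu, hu', he]

theorem card_erase (hP : IsSL2 P) [DecidableEq K] : ((U P).erase 0).card + 1 = (U P).card :=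
  Finset.card_erase_add_one (by simpa using hP.one)

/-- Counting `O × (U \ {0})` along `Phi`, a map into `O` with fibres of size at most `|D|`. -/
theorem card_U_le (hP : IsSL2 P) {a b c d : K} (h : P a b c d) (hc : c ≠ 0) :
    (U P).card ≤ (D P).card + 1 := by
  classical
  have h1 := Finset.card_le_mul_card_image_of_maps_to (fun p hp => hP.Phi_mem hp) (D P).card
    (fun z _ => hP.Phi_fiber z)
  rw [Finset.card_product, mul_comm] at h1
  have h2 : 0 < (O P).card := Finset.card_pos.2 ⟨(a, c), by simpa using ⟨hc, b, d, h⟩⟩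
  have := Nat.le_of_mul_le_mul_right h1 h2
  have := hP.card_erase
  omega

/-- In the extremal case `|D| = |U| - 1` the map `Phi` is onto `O`, so every first column with
nonzero second entry is the first column of an element of trace two. -/
theorem Phi_surj (hP : IsSL2 P) (hD : (D P).card + 1 ≤ (U P).card) {a b c d : K} (h : P a b c d)
    (hc : c ≠ 0) : ∃ b' d', P a b' c d' ∧ a + d' = 2 := by
  classical
  by_contra! hcon
  have hz : (a, c) ∈ O P := by simpa using ⟨hc, b, d, h⟩
  have h1 := Finset.card_le_mul_card_image_of_maps_to (s := O P ×ˢ (U P).erase 0)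
    (t := (O P).erase (a, c)) (f := Phi) (fun p hp => Finset.mem_erase.2 ⟨?_, hP.Phi_mem hp⟩)
    (D P).card (fun z _ => hP.Phi_fiber z)
  · rw [Finset.card_product, mul_comm] at h1
    have h3 := Finset.card_erase_add_one hz
    have h2 : 0 < (O P).card := Finset.card_pos.2 ⟨_, hz⟩
    have h4 := hP.card_erase
    have : (D P).card ≤ ((U P).erase 0).card := by omega
    have h5 : 0 < (D P).card := Finset.card_pos.2 ⟨1, by simpa using ⟨0, 1, hP.one⟩⟩
    nlinarith
  · obtain ⟨⟨a', c'⟩, u⟩ := p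
    simp only [Finset.mem_product, mem_O, Finset.mem_erase, mem_U] at hp
    obtain ⟨⟨hc', b', d', h'⟩, hu, hU⟩ := hp
    intro he
    simp only [Phi, Prod.mk.injEq] at he
    have := hP.conjX h' hU
    rw [he.1, he.2] at this
    apply hcon _ _ this
    linear_combination -he.1

omit [Fintype K] in
theorem conjB (hP : IsSL2 P) {a b d u : K} (h : P a b 0 d) (hu : P 1 u 0 1) :
    P 1 (u * a * a) 0 1 := congr (hP.conjX h hu) (by ring) (by ring) (by ring) (by ring)

theorem D_mul (hP : IsSL2 P) {a a' : K} (h : a ∈ D P) (h' : a' ∈ D P) : a * a' ∈ D P := by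
  rw [mem_D] at *
  obtain ⟨b, d, h⟩ := h
  obtain ⟨b', d', h'⟩ := h'
  exact ⟨_, _, congr (hP.mul h h') (by ring) rfl (by ring) rfl⟩

theorem D_ne (hP : IsSL2 P) {a : K} (h : a ∈ D P) : a ≠ 0 := by
  rw [mem_D] at *
  obtain ⟨b, d, h⟩ := h
  rintro rfl
  simpa using hP.det h

/-- The upper unipotent elements form an additive subgroup of `K`. -/
def Ugrp (hP : IsSL2 P) : AddSubgroup K where
  carrier := {t | P 1 t 0 1}
  zero_mem' := hP.one
  add_mem' := fun {x y} h h' =>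
    congr (hP.mul h h') (by ring) (by ring) (by ring) (by ring)
  neg_mem' := fun {x} h => congr (hP.inv h) rfl rfl (by ring) rfl

theorem card_Ugrp (hP : IsSL2 P) : Nat.card hP.Ugrp = (U P).card := by
  classical
  have : Nat.card hP.Ugrp = Nat.card (U P) :=
    Nat.card_congr (Equiv.subtypeEquivRight fun t => by simp [Ugrp])
  rw [this, Nat.card_eq_fintype_card, Fintype.card_coe]

open Classical in
/-- The squares of the elements of `D`. -/
noncomputable def Sq (P : K → K → K → K → Prop) : Finset K := (D P).image fun a => a * a

theorem card_D_le (P : K → K → K → K → Prop) : (D P).card ≤ 2 * (Sq P).card := by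
  classical
  refine Finset.card_le_mul_card_image (D P) 2 fun z hz => ?_
  obtain ⟨a, ha, rfl⟩ := Finset.mem_image.1 hz
  refine (Finset.card_le_card (t := {a, -a}) fun x hx => ?_).trans Finset.card_le_two
  simpa using mul_self_eq_mul_self_iff.1 (Finset.mem_filter.1 hx).2

/-- The subring generated by the squares of the elements of `D`. -/
def R (P : K → K → K → K → Prop) : Subring K := Subring.closure {x | x ∈ Sq P}

/-- Conjugating by an upper triangular element scales `U` by a square of `D`. -/
theorem R_le (hP : IsSL2 P) (h1 : P 1 1 0 1) : (R P).toAddSubgroup ≤ hP.Ugrp := by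
  intro x hx
  have hx : x ∈ Subring.closure {x | x ∈ Sq P} := hx
  rw [Subring.mem_closure_iff] at hx
  refine (AddSubgroup.closure_le _).2 ?_ hx
  let S : Submonoid K :=
    { carrier := {x | x ∈ Sq P}
      one_mem' := by
        simp only [Sq, Finset.mem_image, Set.mem_ofPred_eq]
        exact ⟨1, by simpa using ⟨0, 1, hP.one⟩, by simp⟩
      mul_mem' := by
        simp only [Sq, Finset.mem_image, Set.mem_ofPred_eq]
        rintro _ _ ⟨a, ha, rfl⟩ ⟨b, hb, rfl⟩
        exact ⟨a * b, hP.D_mul ha hb, by ring⟩ }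
  have hS : Submonoid.closure {x | x ∈ Sq P} ≤ S := Submonoid.closure_le.2 fun x hx => hx
  intro y hy
  have := hS hy
  classical
  obtain ⟨a, ha, rfl⟩ := Finset.mem_image.1 (show y ∈ Sq P from this)
  obtain ⟨b, d, h⟩ := mem_D.1 ha
  have := hP.conjB h h1
  rwa [one_mul] at this

/-- The upper unipotent elements form a subfield `L`. The subring `R` lies in `U`, and
`|U| ≤ |D| + 1 ≤ 2 |Sq| + 1 < 2 |R|`; as `|R|` divides `|U|`, they coincide. -/
theorem exists_subfield (hP : IsSL2 P) (hodd : Odd (Fintype.card K)) (h1 : P 1 1 0 1)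
    {a b c d : K} (h : P a b c d) (hc : c ≠ 0) : ∃ L : Subfield K, ∀ t, t ∈ L ↔ P 1 t 0 1 := by
  classical
  have hle := hP.R_le h1
  have hS : (Sq P).card + 1 ≤ Nat.card (R P) := by
    have h0 : (0 : K) ∉ Sq P := by
      intro h0
      obtain ⟨a, ha, h0⟩ := Finset.mem_image.1 h0
      exact hP.D_ne ha (by simpa using h0)
    rw [← Finset.card_insert_of_notMem h0, ← Fintype.card_coe, ← Nat.card_eq_fintype_card]
    refine Nat.card_le_card_of_injective
      (fun x : (insert 0 (Sq P) : Finset K) => (⟨x.1, ?_⟩ : R P)) ?_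
    · rcases Finset.mem_insert.1 x.2 with h | h
      · rw [h]; exact zero_mem _
      · exact Subring.subset_closure h
    · intro x y hxy
      exact Subtype.ext (by simpa using hxy)
  have hdvd : Nat.card (R P).toAddSubgroup ∣ Nat.card hP.Ugrp := AddSubgroup.card_dvd_of_le hle
  have hdvd2 : Nat.card hP.Ugrp ∣ Nat.card K := AddSubgroup.card_addSubgroup_dvd_card _
  rw [Nat.card_eq_fintype_card (α := K)] at hdvd2
  have hoddU := Odd.of_dvd_nat hodd hdvd2
  have hD := card_D_le P
  have hU := hP.card_U_le h hc
  rw [← hP.card_Ugrp] at hU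
  have hR : Nat.card (R P).toAddSubgroup = Nat.card (R P) := rfl
  have heq : Nat.card hP.Ugrp ≤ Nat.card (R P).toAddSubgroup := by
    obtain ⟨k, hk⟩ := hdvd
    rw [hk] at hoddU hU ⊢
    have hkodd := (Nat.odd_mul.1 hoddU).2
    rw [hR] at *
    have : k < 2 := by
      by_contra! hk2
      nlinarith
    obtain ⟨j, rfl⟩ := hkodd
    have : j = 0 := by omega
    simp [this]
  have hfin := AddSubgroup.eq_of_le_of_card_ge hle heq
  refine ⟨{ R P with inv_mem' := fun x hx => ?_ }, fun t => ?_⟩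
  · by_cases h0 : x = 0
    · subst h0; simp
    · have h2 : x ^ (Fintype.card K - 2) * x = 1 := by
        rw [← pow_succ, ← FiniteField.pow_card_sub_one_eq_one x h0]
        congr 1
        have := Fintype.one_lt_card (α := K)
        omega
      rw [← eq_inv_of_mul_eq_one_left h2]
      exact (R P).pow_mem hx _
  · have : t ∈ (R P).toAddSubgroup ↔ t ∈ hP.Ugrp := by rw [hfin]
    exact this

section rational
variable {L : Subfield K}

theorem card_L (hL : ∀ t, t ∈ L ↔ P 1 t 0 1) : (U P).card = Nat.card L := by
  have : Nat.card L = Nat.card (U P) :=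
    Nat.card_congr (Equiv.subtypeEquivRight fun t => by simp [hL])
  rw [this, Nat.card_eq_fintype_card, Fintype.card_coe]

theorem D_sq_mem (hP : IsSL2 P) (hL : ∀ t, t ∈ L ↔ P 1 t 0 1) {a : K} (h : a ∈ D P) :
    a * a ∈ L := by
  obtain ⟨b, d, h⟩ := mem_D.1 h
  have := hP.conjB h ((hL 1).1 L.one_mem)
  rw [hL]; simpa using this

/-- A subgroup that is not upper triangular contains an upper triangular element whose diagonal
is rational over `L` and different from the identity. -/
theorem exists_torus (hP : IsSL2 P) (hL : ∀ t, t ∈ L ↔ P 1 t 0 1) (h5 : 5 ≤ Nat.card L)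
    {a b c d : K} (h : P a b c d) (hc : c ≠ 0) :
    ∃ s ∈ L, s ≠ 0 ∧ s ≠ 1 ∧ ∃ t, P s t 0 s⁻¹ := by
  classical
  have hU := hP.card_U_le h hc
  rw [card_L hL] at hU
  have : ∃ a ∈ D P, a ∉ ({1, -1} : Finset K) := by
    by_contra! hcon
    have h1 := Finset.card_le_card (s := D P) (t := {1, -1}) hcon
    have h2 : ({1, -1} : Finset K).card ≤ 2 := Finset.card_le_two
    omega
  obtain ⟨a, ha, ha'⟩ := this
  refine ⟨a * a, hP.D_sq_mem hL ha, mul_ne_zero (hP.D_ne ha) (hP.D_ne ha), ?_, ?_⟩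
  · intro h1
    exact ha' (by simpa using mul_self_eq_one_iff.1 h1)
  · obtain ⟨b, d, h⟩ := mem_D.1 (hP.D_mul ha ha)
    refine ⟨b, congr h rfl rfl rfl ?_⟩
    have := hP.det h
    exact eq_inv_of_mul_eq_one_right (by simpa using this)

variable (hP : IsSL2 P) (hL : ∀ t, t ∈ L ↔ P 1 t 0 1) (hL' : ∀ t ∈ L, P 1 0 t 1)
include hP hL hL'

omit [Fintype K] in
theorem weyl : P 0 (-1) 1 0 := by
  have h1 := (hL (-1)).1 (L.neg_mem L.one_mem)
  have h2 := hL' 1 L.one_mem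
  exact congr (hP.mul (hP.mul h1 h2) h1) (by ring) (by ring) (by ring) (by ring)

omit [Fintype K] in
theorem diagL {a : K} (ha : a ∈ L) (h0 : a ≠ 0) : P a 0 0 a⁻¹ := by
  have h1 := (hL a).1 ha
  have h2 := hL' (-a⁻¹) (L.neg_mem (L.inv_mem ha))
  refine congr (hP.mul (hP.mul (hP.mul h1 h2) h1) (weyl hP hL hL')) ?_ ?_ ?_ ?_ <;>
    field_simp <;> ring

/-- Upper triangular elements split: commuting with a rational diagonal element shows that the
unipotent part lies in the subgroup. -/
theorem diagD (h5 : 5 ≤ Nat.card L) {a : K} (ha : a ∈ D P) : P a 0 0 a⁻¹ := by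
  classical
  obtain ⟨t, d, h⟩ := mem_D.1 ha
  have h0 := hP.D_ne ha
  have hd : d = a⁻¹ := eq_inv_of_mul_eq_one_right (by simpa using hP.det h)
  subst hd
  have : ∃ c ∈ U P, c ∉ ({0, 1, -1} : Finset K) := by
    by_contra! hcon
    have h1 := Finset.card_le_card (s := U P) (t := {0, 1, -1}) hcon
    have h2 : ({0, 1, -1} : Finset K).card ≤ 3 := Finset.card_le_three
    rw [card_L hL] at h1
    omega
  obtain ⟨c, hc, hc'⟩ := this
  rw [mem_U, ← hL] at hc
  simp only [Finset.mem_insert, Finset.mem_singleton, not_or] at hc'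
  obtain ⟨hc0, hc1, hc2⟩ := hc'
  have hdc := diagL hP hL hL' hc hc0
  have h1 := hP.mul (hP.mul (hP.mul hdc h) (hP.inv hdc)) (hP.inv h)
  have h2 : P 1 ((c * c - 1) * (a * t)) 0 1 := by
    refine congr h1 ?_ ?_ ?_ ?_ <;> field_simp <;> ring
  rw [← hL] at h2
  have h3 : c * c - 1 ≠ 0 := by
    intro h
    have : c * c = 1 := by linear_combination h
    rcases mul_self_eq_one_iff.1 this with h | h
    · exact hc1 h
    · exact hc2 h
  have h4 : a * t ∈ L := by
    have := L.mul_mem (L.inv_mem (L.sub_mem (L.mul_mem hc hc) L.one_mem)) h2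
    rwa [inv_mul_cancel_left₀ h3] at this
  have h5 : -(a⁻¹ * t) ∈ L := by
    have := L.neg_mem (L.mul_mem (L.inv_mem (hP.D_sq_mem hL ha)) h4)
    convert this using 1
    field_simp
  refine congr (hP.mul h ((hL _).1 h5)) ?_ ?_ ?_ ?_ <;> field_simp <;> ring

/-- If `D ⊆ L`, every element is rational over `L`: by `Phi_surj` the column `(a, c)` belongs to
an element of trace `2` and to one of trace `-2`, which differ by some `t ∈ L` with
`c * t = -4`. -/
theorem mem_of_D_le (h2 : (2 : K) ≠ 0) (hD : ∀ a ∈ D P, a ∈ L) {a b c d : K} (h : P a b c d) :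
    c ∈ L := by
  classical
  by_cases hc : c = 0
  · rw [hc]; exact L.zero_mem
  have hcard : (D P).card + 1 ≤ (U P).card := by
    rw [← hP.card_erase]
    refine Nat.succ_le_succ (Finset.card_le_card fun a ha => ?_)
    simpa [hP.D_ne ha, ← hL] using hD a ha
  have hneg := diagL hP hL hL' (L.neg_mem L.one_mem) (by simp)
  have h' : P (-a) (-b) (-c) (-d) :=
    congr (hP.mul hneg h) (by ring) (by ring) (by simp) (by simp)
  obtain ⟨b1, d1, h1, e1⟩ := hP.Phi_surj hcard h hc
  obtain ⟨b3, d3, h3, e3⟩ := hP.Phi_surj hcard h' (by simpa using hc)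
  have h4 : P a (-b3) c (-d3) :=
    congr (hP.mul hneg h3) (by ring) (by ring) (by simp) (by simp)
  obtain ⟨t, ht, -, e⟩ := hP.stab h1 h4
  rw [← hL] at ht
  have e4 : c * t = -(2 * 2) := by linear_combination -e - e1 - e3
  have ht0 : t ≠ 0 := by
    rintro rfl
    apply mul_ne_zero h2 h2
    linear_combination e4
  have : c = -(2 * 2) * t⁻¹ := by
    field_simp; linear_combination e4
  have h2L : (2 : K) ∈ L := by exact_mod_cast natCast_mem L 2
  rw [this]
  exact L.mul_mem (L.neg_mem (L.mul_mem h2L h2L)) (L.inv_mem ht)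

/-- If `D` is not contained in `L`, then `-1` has a square root in `D`: for `a ∈ D` with `a ∉ L`
the element `a ^ 2 ∈ L` is not a square in `L`, so `-1` or `-a ^ 2` is. -/
theorem exists_sqrt {a : K} (ha : a ∈ D P) (haL : a ∉ L) :
    ∃ i ∈ D P, i * i = -1 := by
  classical
  have hi : ∀ x : L, x * x = -1 → ∃ i ∈ D P, i * i = -1 := by
    intro x hx
    have hx : (x : K) * x = -1 := by exact_mod_cast congrArg Subtype.val hx
    refine ⟨x, ?_, hx⟩
    have h0 : (x : K) ≠ 0 := by
      intro h0; rw [h0] at hx; simp at hx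
    exact mem_D.2 ⟨_, _, diagL hP hL hL' x.2 h0⟩
  have ha0 := hP.D_ne ha
  let y : L := ⟨a * a, hP.D_sq_mem hL ha⟩
  have hy : y ≠ 0 := by
    intro h
    have := congrArg Subtype.val h
    exact mul_ne_zero ha0 ha0 this
  by_cases h1 : IsSquare (-1 : L)
  · obtain ⟨x, hx⟩ := h1
    exact hi x hx.symm
  have h3 : ¬ IsSquare y := by
    rintro ⟨x, hx⟩
    have hx : a * a = x * x := congrArg Subtype.val hx
    rcases mul_self_eq_mul_self_iff.1 hx with h | h
    · exact haL (h ▸ x.2)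
    · exact haL (h ▸ L.neg_mem x.2)
  have h4 : IsSquare (-1 * y) := by
    rw [← quadraticChar_one_iff_isSquare (mul_ne_zero (by simp) hy), map_mul,
      quadraticChar_neg_one_iff_not_isSquare.2 h1, quadraticChar_neg_one_iff_not_isSquare.2 h3]
    norm_num
  obtain ⟨x, hx⟩ := h4
  have hx : -1 * (a * a) = x * x := congrArg Subtype.val hx
  have hx0 : (x : K) ≠ 0 := by
    intro h0
    rw [h0] at hx
    simp [ha0] at hx
  have hxD : (x : K) ∈ D P := mem_D.2 ⟨_, _, diagL hP hL hL' x.2 hx0⟩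
  have hainv : a⁻¹ ∈ D P := by
    obtain ⟨b, d, h⟩ := mem_D.1 ha
    have hd : d = a⁻¹ := eq_inv_of_mul_eq_one_right (by simpa using hP.det h)
    subst hd
    exact mem_D.2 ⟨_, _, congr (hP.inv h) rfl rfl (by simp) rfl⟩
  refine ⟨x * a⁻¹, hP.D_mul hxD hainv, ?_⟩
  field_simp
  linear_combination -hx

omit hP hL hL' in
open Classical in
/-- The columns in `O` whose slope does not lie in `L`. -/
noncomputable def Bad (P : K → K → K → K → Prop) (L : Subfield K) : Finset (K × K) :=
  (O P).filter fun v => v.1 / v.2 ∉ L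

omit hP hL hL' in
open Classical in
/-- The columns in `O` whose slope lies in `L`. -/
noncomputable def Good (P : K → K → K → K → Prop) (L : Subfield K) : Finset (K × K) :=
  (O P).filter fun v => v.1 / v.2 ∈ L

theorem card_Good_le : (Good P L).card ≤ (U P).card * (D P).card := by
  classical
  rw [← Finset.card_product]
  refine Finset.card_le_card_of_injOn (fun v => (v.1 / v.2, v.2)) ?_ ?_
  · rintro ⟨a, c⟩ hv
    simp only [Good, Finset.coe_filter, mem_O, Set.mem_ofPred_eq] at hv
    obtain ⟨⟨hc, b, d, h⟩, hL1⟩ := hv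
    simp only [Finset.coe_product, Set.mem_prod, Finset.mem_coe, mem_U, mem_D, ← hL]
    refine ⟨hL1, ?_⟩
    have h1 := (hL _).1 (L.neg_mem hL1)
    have h2 := hP.mul (hP.inv (weyl hP hL hL')) (hP.mul h1 h)
    refine ⟨_, _, congr h2 (by simp) rfl (by field_simp; ring) rfl⟩
  · rintro ⟨a, c⟩ hv ⟨a', c'⟩ hv' he
    simp only [Good, Finset.coe_filter, mem_O, Set.mem_ofPred_eq] at hv
    simp only [Prod.mk.injEq] at he ⊢
    obtain ⟨e1, rfl⟩ := he
    refine ⟨?_, rfl⟩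
    have := hv.1.1
    field_simp at e1
    exact e1

theorem O_smul (h5 : 5 ≤ Nat.card L) {a b c d s : K} (h : P a b c d) (hs : s ∈ D P) :
    P (s * a) (s⁻¹ * b) (s * c) (s⁻¹ * d) :=
  congr (hP.mul h (diagD hP hL hL' h5 hs)) (by ring) (by ring) (by ring) (by ring)

/-- Scalings by `D` and the elements parametrised by `U` and `Sq` turn one column in `Bad` into
`|D| |U| |Sq|` distinct ones. -/
theorem le_card_Bad (h5 : 5 ≤ Nat.card L) {v : K × K} (hv : v ∈ Bad P L) :
    (D P).card * ((U P).card * (Sq P).card) ≤ (Bad P L).card := by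
  classical
  obtain ⟨a, c⟩ := v
  simp only [Bad, Finset.mem_filter, mem_O] at hv
  obtain ⟨⟨hc, b, d, h⟩, hv⟩ := hv
  rw [← Finset.card_product, ← Finset.card_product]
  refine Finset.card_le_card_of_injOn
    (fun p => (p.1 * (p.2.2 * a + p.2.1 * c), p.1 * c)) ?_ ?_
  · rintro ⟨s, t, r⟩ hp
    simp only [Finset.coe_product, Set.mem_prod, Finset.mem_coe, mem_U, ← hL] at hp
    obtain ⟨hs, ht, hr⟩ := hp
    obtain ⟨l, hl, rfl⟩ := Finset.mem_image.1 hr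
    have hs0 := hP.D_ne hs
    have hl0 := hP.D_ne hl
    have hlL := hP.D_sq_mem hL hl
    simp only [Bad, Finset.coe_filter, mem_O, Set.mem_ofPred_eq]
    refine ⟨⟨mul_ne_zero hs0 hc, ?_⟩, fun hcon => hv ?_⟩
    · have h1 := hP.mul ((hL t).1 ht) (hP.mul (diagD hP hL hL' h5 hl) h)
      have h2 := O_smul hP hL hL' h5 h1 (hP.D_mul hs hl)
      exact ⟨_, _, congr h2 (by field_simp; ring) rfl (by field_simp; ring) rfl⟩
    · have := L.mul_mem (L.sub_mem hcon ht) (L.inv_mem hlL)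
      convert this using 1
      field_simp
      ring
  · rintro ⟨s, t, r⟩ hp ⟨s', t', r'⟩ hp' he
    simp only [Finset.coe_product, Set.mem_prod, Finset.mem_coe, mem_U, ← hL] at hp hp'
    obtain ⟨hs, ht, hr⟩ := hp
    obtain ⟨hs', ht', hr'⟩ := hp'
    obtain ⟨l, hl, rfl⟩ := Finset.mem_image.1 hr
    obtain ⟨l', hl', rfl⟩ := Finset.mem_image.1 hr'
    have hs0 := hP.D_ne hs
    simp only [Prod.mk.injEq] at he ⊢
    obtain ⟨e1, e2⟩ := he
    have e2 := mul_right_cancel₀ hc e2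
    subst e2
    have e1 := mul_left_cancel₀ hs0 e1
    have e3 : l * l = l' * l' := by
      by_contra hne
      have hne : l * l - l' * l' ≠ 0 := sub_ne_zero.2 hne
      apply hv
      have := L.mul_mem (L.sub_mem ht' ht)
        (L.inv_mem (L.sub_mem (hP.D_sq_mem hL hl) (hP.D_sq_mem hL hl')))
      convert this using 1
      rw [eq_mul_inv_iff_mul_eq₀ hne, div_mul_eq_mul_div, div_eq_iff hc]
      linear_combination e1
    refine ⟨rfl, ?_, e3⟩
    rw [e3] at e1
    apply mul_right_cancel₀ hc
    linear_combination e1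

/-- An irrational slope is the slope of the first column of at most two elements of trace zero. -/
theorem trace_zero_ratio (h5 : 5 ≤ Nat.card L) {x y z y' m : K} (hz : z ≠ 0) (hbad : x / z ∉ L)
    (h : P x y z (-x)) (h' : P (m * x) y' (m * z) (-(m * x))) : m = 1 ∨ m = -1 := by
  have hm : m ∈ D P := mem_D.2 (hP.ratio h h')
  have hm0 := hP.D_ne hm
  have hmL := hP.D_sq_mem hL hm
  have e1 := hP.det h
  have e2 := hP.det h'
  have h1 := hP.mul (hP.inv (diagD hP hL hL' h5 hm)) (hP.mul (hP.inv h) h')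
  have h2 : P 1 ((x / z) * (1 - m * m) / (m * m)) 0 1 := by
    refine congr h1 ?_ ?_ ?_ ?_
    · field_simp; linear_combination e1
    · field_simp
      linear_combination x * e2 - x * m * m * e1
    · ring
    · linear_combination e2
  rw [← hL] at h2
  rw [← mul_self_eq_one_iff]
  by_contra hne
  have hne : 1 - m * m ≠ 0 := sub_ne_zero.2 (Ne.symm hne)
  apply hbad
  have := L.mul_mem (L.mul_mem h2 hmL) (L.inv_mem (L.sub_mem L.one_mem hmL))
  convert this using 1
  rw [eq_mul_inv_iff_mul_eq₀ hne, div_mul_cancel₀ _ (mul_ne_zero hm0 hm0)]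

/-- If `-1` has a square root `i ∈ D`, all slopes are rational. If not, each pair of an irrational
column `v` and `s ∈ U` gives an element of trace zero with `i`-eigenvector `v`. Its first column
is either of rational slope, and `card_Good_le` bounds the number of those, or is one of the at
most two trace-zero columns of its irrational slope; this is too few for the size of `Bad` given
by `le_card_Bad`. -/
theorem bad_empty (h5 : 5 ≤ Nat.card L) (h2 : (2 : K) ≠ 0) {i : K} (hi : i ∈ D P)
    (hi2 : i * i = -1) : Bad P L = ∅ := by
  classical
  by_contra hne
  obtain ⟨v₀, hv₀⟩ := Finset.nonempty_iff_ne_empty.2 hne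
  have hi0 := hP.D_ne hi
  have hidiag : P i 0 0 (-i) := congr (diagD hP hL hL' h5 hi) rfl rfl rfl
    (inv_eq_of_mul_eq_one_right (by linear_combination -hi2))
  have hO : ∀ v : K × K, ∃ b d, v ∈ O P → P v.1 b v.2 d := by
    intro v
    by_cases hv : v ∈ O P
    · obtain ⟨-, b, d, h⟩ := mem_O.1 hv
      exact ⟨b, d, fun _ => h⟩
    · exact ⟨0, 0, fun h => absurd h hv⟩
  choose B E hBE using hO
  let Psi : (K × K) × K → K × K := fun p =>
    (i * (p.1.1 * E p.1 + B p.1 * p.1.2) - p.2 * p.1.2 * i * p.1.1,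
      2 * i * p.1.2 * E p.1 - p.2 * p.1.2 * p.1.2 * i)
  have hbadO : ∀ v ∈ Bad P L, v ∈ O P := fun v hv => (Finset.mem_filter.1 hv).1
  have hbad2 : ∀ v ∈ Bad P L, v.2 ≠ 0 := fun v hv => (mem_O.1 (hbadO v hv)).1
  -- `Psi (v, s)` is the first column of a trace-zero element with `i`-eigenvector `v`
  have hPsi : ∀ p ∈ Bad P L ×ˢ U P, ∃ y, P (Psi p).1 y (Psi p).2 (-(Psi p).1) ∧
      (Psi p).1 * p.1.1 + y * p.1.2 = i * p.1.1 := by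
    rintro ⟨v, s⟩ hp
    rw [Finset.mem_product, mem_U] at hp
    have h := hBE v (hbadO v hp.1)
    have hs := hp.2
    have e := hP.det h
    refine ⟨_, congr (hP.mul (hP.mul h (hP.mul hidiag hs)) (hP.inv h)) ?_ rfl ?_ ?_, ?_⟩
    · simp only [Psi]; ring
    · simp only [Psi]; ring
    · simp only [Psi]; ring
    · simp only [Psi]; linear_combination i * v.1 * e
  have heig : ∀ p ∈ Bad P L ×ˢ U P,
      (Psi p).2 * p.1.1 - (Psi p).1 * p.1.2 = i * p.1.2 := by
    rintro ⟨v, s⟩ hp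
    rw [Finset.mem_product] at hp
    have e := hP.det (hBE v (hbadO v hp.1))
    simp only [Psi]
    linear_combination i * v.2 * e
  have hPsi0 : ∀ p ∈ Bad P L ×ˢ U P, (Psi p).2 ≠ 0 := by
    intro p hp h0
    obtain ⟨y, hy, hye⟩ := hPsi p hp
    have e := heig p hp
    rw [h0] at hy e
    have hpB := Finset.mem_filter.1 (Finset.mem_product.1 hp).1
    rw [Finset.mem_product] at hp
    have hc := hbad2 _ hp.1
    have hx : (Psi p).1 = -i := by
      apply mul_right_cancel₀ hc
      linear_combination -e
    rw [hx] at hy hye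
    have h3 : P 1 (i * y) 0 1 :=
      congr (hP.mul hidiag hy) (by linear_combination -hi2) (by ring) (by ring)
        (by linear_combination -hi2)
    rw [← hL] at h3
    have h2L : (2 : K) ∈ L := by exact_mod_cast natCast_mem L 2
    apply hpB.2
    convert L.neg_mem (L.div_mem h3 h2L) using 1
    field_simp
    linear_combination i * hye + 2 * p.1.1 * hi2
  have hmaps : ∀ p ∈ Bad P L ×ˢ U P, Psi p ∈ O P := fun p hp =>
    mem_O.2 ⟨hPsi0 p hp, _, _, (hPsi p hp).choose_spec.1⟩
  have hfib : ∀ z, ((Bad P L ×ˢ U P).filter fun p => Psi p = z).card ≤ (D P).card := by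
    intro z
    rcases ((Bad P L ×ˢ U P).filter fun p => Psi p = z).eq_empty_or_nonempty with h0 | ⟨q, hq⟩
    · simp [h0]
    have hrat : ∀ p ∈ (Bad P L ×ˢ U P).filter fun p => Psi p = z,
        p.1.1 = p.1.2 * ((z.1 + i) / z.2) := by
      intro p hp
      obtain ⟨hp, hz⟩ := Finset.mem_filter.1 hp
      have e := heig p hp
      have e0 := hPsi0 p hp
      rw [hz] at e e0
      field_simp
      linear_combination e
    have hq' := hrat q hq
    obtain ⟨hqm, hqz⟩ := Finset.mem_filter.1 hq
    have hqB := (Finset.mem_product.1 hqm).1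
    have hqc := hbad2 _ hqB
    refine Finset.card_le_card_of_injOn (fun p => p.1.2 / q.1.2) ?_ ?_
    · intro p hp
      have hp' := hrat p hp
      have hpB := (Finset.mem_product.1 (Finset.mem_filter.1 hp).1).1
      rw [Finset.mem_coe, mem_D]
      refine hP.ratio (hBE _ (hbadO _ hqB)) (congr (hBE _ (hbadO _ hpB)) ?_ rfl ?_ rfl)
      · rw [hp', hq']; field_simp
      · field_simp
    · rintro ⟨⟨a, c⟩, s⟩ hp ⟨⟨a', c'⟩, s'⟩ hp' he
      have ea := hrat _ hp
      have ea' := hrat _ hp'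
      have hc := hbad2 _ (Finset.mem_product.1 (Finset.mem_filter.1 hp).1).1
      have hz := (Finset.mem_filter.1 hp).2
      have hz' := (Finset.mem_filter.1 hp').2
      simp only at ea ea' he hc
      obtain rfl : c = c' := by field_simp at he; exact he
      obtain rfl : a = a' := by rw [ea, ea']
      have := congrArg Prod.snd (hz.trans hz'.symm)
      simp only [Psi] at this
      obtain rfl : s = s' := by
        apply mul_right_cancel₀ (mul_ne_zero (mul_ne_zero hc hc) hi0)
        linear_combination -this
      rfl
  set I := (Bad P L).filter fun z => ∃ p ∈ Bad P L ×ˢ U P, Psi p = z with hI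
  have hIb : ∀ z ∈ I, z ∈ Bad P L ∧ ∃ y, P z.1 y z.2 (-z.1) := by
    intro z hz
    obtain ⟨h1, p, hp, rfl⟩ := Finset.mem_filter.1 hz
    exact ⟨h1, (hPsi p hp).imp fun _ h => h.1⟩
  have hcount1 : (Bad P L ×ˢ U P).card ≤ (D P).card * (Good P L ∪ I).card := by
    refine Finset.card_le_mul_card_image_of_maps_to (f := Psi) (fun p hp => ?_) _
      fun z _ => hfib z
    rw [Finset.mem_union]
    by_cases hg : (Psi p).1 / (Psi p).2 ∈ L
    · exact Or.inl (Finset.mem_filter.2 ⟨hmaps p hp, hg⟩)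
    · exact Or.inr (Finset.mem_filter.2 ⟨Finset.mem_filter.2 ⟨hmaps p hp, hg⟩, p, hp, rfl⟩)
  have hcount2 : (I ×ˢ D P).card ≤ 2 * (Bad P L).card := by
    refine Finset.card_le_mul_card_image_of_maps_to
      (f := fun p : (K × K) × K => (p.2 * p.1.1, p.2 * p.1.2)) ?_ 2 ?_
    · rintro ⟨z, s⟩ hp
      rw [Finset.mem_product] at hp
      obtain ⟨hz, hs⟩ := hp
      have hzB := (hIb z hz).1
      have hs0 := hP.D_ne hs
      refine Finset.mem_filter.2 ⟨mem_O.2 ⟨mul_ne_zero hs0 (hbad2 _ hzB), _, _,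
        O_smul hP hL hL' h5 (hBE _ (hbadO _ hzB)) hs⟩, ?_⟩
      rw [mul_div_mul_left _ _ hs0]
      exact (Finset.mem_filter.1 hzB).2
    · intro w _
      set F := (I ×ˢ D P).filter fun p : (K × K) × K => (p.2 * p.1.1, p.2 * p.1.2) = w
      rcases F.eq_empty_or_nonempty with h0 | ⟨⟨⟨x, z⟩, s⟩, hq⟩
      · simp [h0]
      refine (Finset.card_le_card (t := {((x, z), s), ((-x, -z), -s)}) ?_).trans
        Finset.card_le_two
      rintro ⟨⟨x', z'⟩, s'⟩ hp
      obtain ⟨hq, hqw⟩ := Finset.mem_filter.1 hq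
      obtain ⟨hp, hpw⟩ := Finset.mem_filter.1 hp
      rw [Finset.mem_product] at hp hq
      obtain ⟨hz, hs⟩ := hq
      obtain ⟨hz', hs'⟩ := hp
      obtain ⟨hzB, y, hy⟩ := hIb _ hz
      obtain ⟨hzB', y', hy'⟩ := hIb _ hz'
      have hs0 := hP.D_ne hs
      have hs0' := hP.D_ne hs'
      rw [← hqw] at hpw
      simp only [Prod.mk.injEq] at hpw hs hs' hy hy' hs0 hs0'
      obtain ⟨e1, e2⟩ := hpw
      have ex : x' = s / s' * x := by field_simp; linear_combination e1
      have ez : z' = s / s' * z := by field_simp; linear_combination e2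
      rw [ex, ez] at hy'
      have := trace_zero_ratio hP hL hL' h5 (hbad2 _ hzB) (Finset.mem_filter.1 hzB).2 hy hy'
      rcases this with hm | hm
      · rw [hm] at ex ez
        have : s = s' := by field_simp at hm; exact hm
        simp [ex, ez, this]
      · rw [hm] at ex ez
        have : s' = -s := by field_simp at hm; linear_combination hm
        simp [ex, ez, this]
  have h6 := card_Good_le hP hL hL'
  have h7 := le_card_Bad hP hL hL' h5 hv₀
  have h8 := card_D_le P
  have h9 := Finset.card_union_le (Good P L) I
  have h10 : 0 < (Bad P L).card := Finset.card_pos.2 ⟨_, hv₀⟩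
  rw [Finset.card_product] at hcount1 hcount2
  have h11 : (Good P L ∪ I).card * (D P).card ≤
      (U P).card * (D P).card * (D P).card + 2 * (Bad P L).card := by
    nlinarith
  have h12 : (U P).card * (D P).card * (D P).card ≤ 2 * (Bad P L).card := by
    have : (D P).card * (U P).card * (D P).card ≤ (D P).card * (U P).card * (2 * (Sq P).card) :=
      Nat.mul_le_mul_left _ h8
    nlinarith
  rw [← card_L hL] at h5
  nlinarith

/-- Elements of trace two are rational over `L`: either `D ⊆ L`, or all slopes are rational and
the entries are recovered from the slopes and the trace. -/
theorem mem_of_trace_two (h5 : 5 ≤ Nat.card L) (h2 : (2 : K) ≠ 0) {a b c d : K}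
    (h : P a b c d) (htr : a + d = 2) : a ∈ L ∧ b ∈ L ∧ c ∈ L ∧ d ∈ L := by
  classical
  have h2L : (2 : K) ∈ L := by exact_mod_cast natCast_mem L 2
  by_cases hD : ∀ a ∈ D P, a ∈ L
  · have hall := fun {a b c d} (h : P a b c d) => mem_of_D_le hP hL hL' h2 hD h
    have hY := hL' 1 L.one_mem
    have hc := hall h
    have ha := hall (hP.mul hY h)
    have hd := hall (hP.mul h hY)
    have hb := hall (hP.mul (hP.mul hY h) hY)
    have ha : a ∈ L := by
      convert L.sub_mem ha hc using 1; ring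
    have hd : d ∈ L := by
      convert L.sub_mem hd hc using 1; ring
    refine ⟨ha, ?_, hc, hd⟩
    convert L.sub_mem (L.sub_mem (L.sub_mem hb ha) hc) hd using 1; ring
  · push Not at hD
    obtain ⟨a', ha', haL'⟩ := hD
    obtain ⟨i, hi, hi2⟩ := exists_sqrt hP hL hL' ha' haL'
    have hbad := bad_empty hP hL hL' h5 h2 hi hi2
    have hgood : ∀ {a b c d}, P a b c d → c ≠ 0 → a / c ∈ L := by
      intro a b c d h hc
      by_contra hcon
      have : (a, c) ∈ Bad P L := Finset.mem_filter.2 ⟨mem_O.2 ⟨hc, b, d, h⟩, hcon⟩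
      rw [hbad] at this
      simp at this
    by_cases hc : c = 0
    · subst hc
      have e := hP.det h
      have ha : a = 1 := by
        have : (a - 1) * (a - 1) = 0 := by linear_combination a * htr - e
        have := mul_self_eq_zero.1 this
        linear_combination this
      subst ha
      have hd : d = 1 := by linear_combination htr
      subst hd
      exact ⟨L.one_mem, (hL b).2 h, L.zero_mem, L.one_mem⟩
    · have h1 := hgood h hc
      have h3 := hgood (hP.inv h) (neg_ne_zero.2 hc)
      have e := hP.det h
      have hcL : c ∈ L := by
        have : c = 2 / (a / c - d / -c) := by
          have : a / c - d / -c = 2 / c := by rw [← htr]; field_simp; ring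
          rw [this]; field_simp
        rw [this]
        exact L.div_mem h2L (L.sub_mem h1 h3)
      have haL : a ∈ L := by
        convert L.mul_mem h1 hcL using 1; field_simp
      have hdL : d ∈ L := by
        convert L.sub_mem h2L haL using 1; linear_combination htr
      refine ⟨haL, ?_, hcL, hdL⟩
      have : b = (a * d - 1) / c := by field_simp; linear_combination -e
      rw [this]
      exact L.div_mem (L.sub_mem (L.mul_mem haL hdL) L.one_mem) hcL

end rational
end IsSL2

namespace Huge

/-! ### Transvections in a group of isometries -/

/-- The transvection `u ↦ u + c ⟨u, v⟩ v` lies in `G`. -/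
def Tr (ω : LinearMap.BilinForm K V) (G : Subgroup (V ≃ₗ[K] V)) (v : V) (c : K) : Prop :=
  ∃ τ ∈ G, ∀ u, τ u = u + (c * ω u v) • v

/-- For `⟨e, f⟩ = 1`: the group `G` contains the element which acts on the plane spanned by `e`
and `f` by the matrix `!![a, b; c, d]` of determinant one and trivially on its orthogonal
complement. -/
def PP (ω : LinearMap.BilinForm K V) (G : Subgroup (V ≃ₗ[K] V)) (e f : V) (a b c d : K) : Prop :=
  a * d - b * c = 1 ∧ ∃ τ ∈ G, ∀ u, τ u = u + ((a - 1) * ω u f + b * ω e u) • e +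
    (c * ω u f + (d - 1) * ω e u) • f

section basic
variable {ω : LinearMap.BilinForm K V} {G : Subgroup (V ≃ₗ[K] V)}

theorem tr_congr {v w : V} {c c' : K} (h : Tr ω G v c)
    (hvw : ∀ u, (c * ω u v) • v = (c' * ω u w) • w) : Tr ω G w c' := by
  obtain ⟨τ, hτ, h⟩ := h
  exact ⟨τ, hτ, fun u => by rw [h, hvw]⟩

theorem tr_zero (v : V) : Tr ω G v 0 := ⟨1, G.one_mem, fun u => by simp⟩

theorem tr_zero_left (c : K) : Tr ω G 0 c := ⟨1, G.one_mem, fun u => by simp⟩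

theorem tr_smul_iff {v : V} {a c : K} : Tr ω G (a • v) c ↔ Tr ω G v (a ^ 2 * c) := by
  constructor <;> refine fun h => tr_congr h fun u => ?_ <;>
  · simp only [map_smul, smul_eq_mul]
    module

variable (hAlt : ω.IsAlt)
include hAlt

theorem tr_add {v : V} {c c' : K} (h : Tr ω G v c) (h' : Tr ω G v c') : Tr ω G v (c + c') := by
  obtain ⟨τ, hτ, h⟩ := h
  obtain ⟨τ', hτ', h'⟩ := h'
  refine ⟨τ * τ', G.mul_mem hτ hτ', fun u => ?_⟩
  rw [LinearEquiv.mul_apply, h, h']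
  simp only [map_add, map_smul, LinearMap.add_apply, LinearMap.smul_apply, smul_eq_mul,
    hAlt.self_eq_zero]
  module

theorem tr_neg {v : V} {c : K} (h : Tr ω G v c) : Tr ω G v (-c) := by
  obtain ⟨τ, hτ, h⟩ := h
  refine ⟨τ⁻¹, G.inv_mem hτ, fun u => ?_⟩
  apply τ.injective
  rw [← LinearEquiv.mul_apply, mul_inv_cancel, h]
  simp only [map_add, map_smul, LinearMap.add_apply, LinearMap.smul_apply, smul_eq_mul,
    hAlt.self_eq_zero, LinearEquiv.coe_one, id]
  module

/-- For orthogonal `v`, `w` the transvections along `v`, `w`, `v + w` commute and generate those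
along all combinations. -/
theorem tr_comb {v w : V} (h0 : ω v w = 0) {a b c : K} (hv : Tr ω G v (c * a ^ 2 - c * a * b))
    (hw : Tr ω G w (c * b ^ 2 - c * a * b)) (hvw : Tr ω G (v + w) (c * a * b)) :
    Tr ω G (a • v + b • w) c := by
  have h1 : ω w v = 0 := by rw [← hAlt.neg_eq, h0, neg_zero]
  obtain ⟨τ, hτ, hv⟩ := hv
  obtain ⟨τ', hτ', hw⟩ := hw
  obtain ⟨τ'', hτ'', hvw⟩ := hvw
  refine ⟨τ * τ' * τ'', G.mul_mem (G.mul_mem hτ hτ') hτ'', fun u => ?_⟩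
  rw [LinearEquiv.mul_apply, LinearEquiv.mul_apply, hv, hw, hvw]
  simp only [map_add, map_smul, LinearMap.add_apply, LinearMap.smul_apply, smul_eq_mul,
    hAlt.self_eq_zero, h0, h1]
  module

/-- For `y` orthogonal to `e`, the transvections along `y + θe`, `y - θe` and the inverse square
of the one along `y` multiply to a transvection along `e`. -/
theorem tr_sq {y e : V} (h0 : ω y e = 0) {θ : K} (h1 : Tr ω G (y + θ • e) 1)
    (h2 : Tr ω G (y - θ • e) 1) (h3 : Tr ω G y (-2)) : Tr ω G e (2 * θ ^ 2) := by
  have h0' : ω e y = 0 := by rw [← hAlt.neg_eq, h0, neg_zero]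
  obtain ⟨τ, hτ, hv⟩ := h1
  obtain ⟨τ', hτ', hw⟩ := h2
  obtain ⟨τ'', hτ'', hvw⟩ := h3
  refine ⟨τ * τ' * τ'', G.mul_mem (G.mul_mem hτ hτ') hτ'', fun u => ?_⟩
  rw [LinearEquiv.mul_apply, LinearEquiv.mul_apply, hv, hw, hvw]
  simp only [map_add, map_sub, map_smul, LinearMap.add_apply, LinearMap.sub_apply,
    LinearMap.smul_apply, smul_eq_mul, hAlt.self_eq_zero, h0, h0']
  module

/-- The transvection along `v - w` with parameter `⟨v, w⟩⁻¹` sends `v` to `w`. -/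
theorem exists_move {v w : V} (h0 : ω v w ≠ 0) (h : Tr ω G (v - w) (ω v w)⁻¹) :
    ∃ h ∈ G, h v = w ∧ ∀ u, ω u v = ω u w → h u = u := by
  obtain ⟨τ, hτ, h⟩ := h
  refine ⟨τ, hτ, ?_, fun u hu => ?_⟩
  · rw [h, map_sub, hAlt.self_eq_zero, zero_sub, mul_neg, inv_mul_cancel₀ h0]
    module
  · rw [h, map_sub, hu]
    simp

/-- The elements of `G` acting on a hyperbolic plane only form a subgroup of `SL₂`. -/
theorem pp_isSL2 {e f : V} (hef : ω e f = 1) : IsSL2 (PP ω G e f) := by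
  have hfe : ω f e = -1 := by rw [← hAlt.neg_eq, hef]
  refine ⟨fun h => h.1, ⟨by ring, 1, G.one_mem, fun u => by simp⟩, ?_, ?_⟩
  · rintro a b c d a' b' c' d' ⟨h, τ, hτ, hτ1⟩ ⟨h', τ', hτ', hτ1'⟩
    refine ⟨by linear_combination (a' * d' - b' * c') * h + h', τ * τ', G.mul_mem hτ hτ',
      fun u => ?_⟩
    rw [LinearEquiv.mul_apply, hτ1, hτ1']
    simp only [map_add, map_smul, LinearMap.add_apply, LinearMap.smul_apply, smul_eq_mul,
      hAlt.self_eq_zero, hef]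
    module
  · rintro a b c d ⟨h, τ, hτ, hτ1⟩
    refine ⟨by linear_combination h, τ⁻¹, G.inv_mem hτ, fun u => ?_⟩
    apply τ.injective
    rw [← LinearEquiv.mul_apply, mul_inv_cancel, hτ1]
    simp only [map_add, map_smul, LinearMap.add_apply, LinearMap.smul_apply, smul_eq_mul,
      hAlt.self_eq_zero, hef, LinearEquiv.coe_one, id]
    linear_combination (norm := module) (-ω u f * h) • e - (ω e u * h) • f

theorem pp_upper {e f : V} {t : K} : PP ω G e f 1 t 0 1 ↔ Tr ω G e (-t) := by
  constructor
  · rintro ⟨-, τ, hτ, h⟩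
    refine ⟨τ, hτ, fun u => ?_⟩
    rw [h, ← hAlt.neg_eq u e]
    module
  · rintro ⟨τ, hτ, h⟩
    refine ⟨by ring, τ, hτ, fun u => ?_⟩
    rw [h, ← hAlt.neg_eq u e]
    module

omit hAlt in
theorem pp_lower {e f : V} {t : K} : PP ω G e f 1 0 t 1 ↔ Tr ω G f t := by
  constructor
  · rintro ⟨-, τ, hτ, h⟩
    refine ⟨τ, hτ, fun u => ?_⟩
    rw [h]
    module
  · rintro ⟨τ, hτ, h⟩
    refine ⟨by ring, τ, hτ, fun u => ?_⟩
    rw [h]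
    module

omit hAlt in
theorem tr_conj (hS : ∀ g ∈ G, IsSp ω g) {v : V} {c : K} {h : V ≃ₗ[K] V} (hh : h ∈ G)
    (hv : Tr ω G v c) : Tr ω G (h v) c := by
  obtain ⟨τ, hτ, hv⟩ := hv
  refine ⟨h * τ * h⁻¹, G.mul_mem (G.mul_mem hh hτ) (G.inv_mem hh), fun u => ?_⟩
  have hu : h (h⁻¹ u) = u := by rw [← LinearEquiv.mul_apply, mul_inv_cancel]; rfl
  rw [LinearEquiv.mul_apply, LinearEquiv.mul_apply, hv]
  have := hS h hh (h⁻¹ u) v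
  rw [hu] at this
  rw [map_add, map_smul, hu, this]

/-- Every symplectic transvection is of the form `u ↦ u + c⟨u, x⟩x`. -/
theorem transvection_form (hNd : ω.Nondegenerate) {τ : V ≃ₗ[K] V}
    (h : IsSymplecticTransvection ω τ) : ∃ x c, ∀ u, τ u = u + (c * ω u x) • x := by
  obtain ⟨⟨x, hx⟩, hS⟩ := h
  choose φ hφ using hx
  have hτ : ∀ v, τ v = v + φ v • x := fun v => by rw [← hφ]; abel
  by_cases hx0 : x = 0
  · subst hx0
    exact ⟨0, 0, fun u => by rw [hτ]; simp⟩
  obtain ⟨w, hw⟩ : ∃ w, ω x w ≠ 0 := by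
    by_contra! hcon
    exact hx0 (hNd.1 x hcon)
  refine ⟨x, -φ w / ω x w, fun u => ?_⟩
  have h1 := hS u w
  rw [hτ, hτ] at h1
  simp only [map_add, map_smul, LinearMap.add_apply, LinearMap.smul_apply, smul_eq_mul,
    hAlt.self_eq_zero] at h1
  rw [hτ]
  congr 2
  field_simp
  linear_combination h1

/-- The transvection `u ↦ u + c ⟨u, v⟩ v` as an automorphism of `V`. -/
noncomputable def Tv (v : V) (c : K) : V ≃ₗ[K] V :=
  LinearEquiv.ofLinearMap (Tmap ω v c) (Tmap ω v (-c))
    (by ext u; simp [Tmap, hAlt.self_eq_zero]) (by ext u; simp [Tmap, hAlt.self_eq_zero])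

theorem Tv_apply (v : V) (c : K) (u : V) : Tv hAlt v c u = u + (c * ω u v) • v := by
  simp [Tv, Tmap, mul_smul]

omit hAlt in
theorem isSp_of_form (hAlt : ω.IsAlt) {τ : V ≃ₗ[K] V} {x : V} {c : K}
    (h : ∀ u, τ u = u + (c * ω u x) • x) : IsSp ω τ := by
  intro u v
  rw [h, h]
  simp only [map_add, map_smul, LinearMap.add_apply, LinearMap.smul_apply, smul_eq_mul,
    hAlt.self_eq_zero]
  rw [← hAlt.neg_eq x v]
  ring

theorem isSympTrans_of_form {τ : V ≃ₗ[K] V} {x : V} {c : K}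
    (h : ∀ u, τ u = u + (c * ω u x) • x) : IsSymplecticTransvection ω τ :=
  ⟨⟨x, fun v => ⟨c * ω v x, by rw [h]; abel⟩⟩, isSp_of_form hAlt h⟩

end basic

/-! ### The `L`-rational structure given by a symplectic basis -/

section lattice
variable {ω : LinearMap.BilinForm K V} {m : ℕ} {b : Basis (Fin m ⊕ Fin m) K V}

/-- The `L`-span of the basis `b`: the vectors whose coordinates all lie in `L`. -/
def VL (b : Basis (Fin m ⊕ Fin m) K V) (L : Subfield K) : AddSubgroup V where
  carrier := {v | ∀ i, b.repr v i ∈ L}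
  zero_mem' := fun i => by simp
  add_mem' := fun h h' i => by simpa using L.add_mem (h i) (h' i)
  neg_mem' := fun h i => by simpa using L.neg_mem (h i)

theorem smul_VL {L : Subfield K} {a : K} {v : V} (ha : a ∈ L) (hv : v ∈ VL b L) :
    a • v ∈ VL b L := fun i => by simpa using L.mul_mem ha (hv i)

theorem basis_VL (L : Subfield K) (i) : b i ∈ VL b L := fun j => by
  rw [Basis.repr_self, Finsupp.single_apply]
  split_ifs
  · exact L.one_mem
  · exact L.zero_mem

theorem VL_mono {L L' : Subfield K} (h : L ≤ L') {v : V} (hv : v ∈ VL b L) : v ∈ VL b L' :=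
  fun i => h (hv i)

/-- The sign for which `⟨b i, b i.swap⟩ = sg K i`: it is `1` on the first half of the index set
and `-1` on the second. -/
def sg (K : Type*) [Field K] : Fin m ⊕ Fin m → K := Sum.elim (fun _ => 1) (fun _ => -1)

theorem sg_mul (i : Fin m ⊕ Fin m) : sg K i * sg K i = 1 := by rcases i with i | i <;> simp [sg]

theorem sg_mem (L : Subfield K) (i : Fin m ⊕ Fin m) : sg K i ∈ L := by
  rcases i with i | i <;> simp [sg, L.one_mem, L.neg_mem]

variable (hb : IsSymplecticBasis ω b) (hAlt : ω.IsAlt)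
include hb hAlt

theorem form_basis (i j : Fin m ⊕ Fin m) :
    ω (b j) (b i.swap) = if i = j then sg K i else 0 := by
  obtain ⟨h1, h2, h3⟩ := hb
  have h4 : ∀ i j, ω (b (Sum.inr i)) (b (Sum.inl j)) = -(if i = j then (1 : K) else 0) := by
    intro i j
    rw [← hAlt.neg_eq, h3]
    simp [eq_comm]
  rcases i with i | i <;> rcases j with j | j <;> simp [h1, h2, h3, h4, sg, eq_comm]
  split_ifs <;> simp

theorem repr_eq (u : V) (i : Fin m ⊕ Fin m) : b.repr u i = sg K i * ω u (b i.swap) := by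
  have : (b.coord i) = sg K i • ω.flip (b i.swap) := by
    refine b.ext fun j => ?_
    simp only [Basis.coord_apply, Basis.repr_self, Finsupp.single_apply, LinearMap.smul_apply,
      LinearMap.BilinForm.flip_apply, form_basis hb hAlt, smul_eq_mul]
    by_cases h : i = j
    · subst h; simp [sg_mul]
    · simp [h, Ne.symm h]
  simpa using congrArg (fun φ => φ u) this

theorem VL_iff {L : Subfield K} {v : V} : v ∈ VL b L ↔ ∀ i, ω v (b i) ∈ L := by
  constructor
  · intro h i
    have := repr_eq hb hAlt v i.swap
    rw [Sum.swap_swap] at this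
    have h1 : ω v (b i) = sg K i.swap * b.repr v i.swap := by
      rw [this, ← mul_assoc, sg_mul, one_mul]
    rw [h1]
    exact L.mul_mem (sg_mem L _) (h _)
  · intro h i
    rw [repr_eq hb hAlt]
    exact L.mul_mem (sg_mem L _) (h _)

theorem form_mem {L : Subfield K} {v w : V} (hv : v ∈ VL b L) (hw : w ∈ VL b L) : ω v w ∈ L := by
  rw [← b.sum_repr w, map_sum]
  refine L.sum_mem fun i _ => ?_
  rw [map_smul, smul_eq_mul]
  exact L.mul_mem (hw i) ((VL_iff hb hAlt).1 hv i)

theorem exists_form_ne {v : V} (hv : v ≠ 0) : ∃ i, ω v (b i) ≠ 0 := by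
  by_contra! hcon
  apply hv
  apply b.ext_elem
  intro i
  rw [repr_eq hb hAlt, hcon]
  simp

omit hb hAlt in
theorem mem_SpL {L : Subfield K} {g : V ≃ₗ[K] V} :
    g ∈ SpL ω b L ↔ IsSp ω g ∧ ∀ j, g (b j) ∈ VL b L := by
  simp only [SpL, Set.mem_ofPred_eq, LinearMap.toMatrix_apply]
  exact and_congr_right fun _ => forall_comm

omit hb hAlt in
theorem SpL_VL {L : Subfield K} {g : V ≃ₗ[K] V} (hg : g ∈ SpL ω b L) {v : V} (hv : v ∈ VL b L) :
    g v ∈ VL b L := by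
  rw [← b.sum_repr v, map_sum]
  refine (VL b L).sum_mem fun i _ => ?_
  rw [map_smul]
  exact smul_VL (hv i) ((mem_SpL.1 hg).2 i)

theorem form_SpL {L : Subfield K} {τ : V ≃ₗ[K] V} {x : V} {c : K} (hx : x ∈ VL b L) (hc : c ∈ L)
    (h : ∀ u, τ u = u + (c * ω u x) • x) : τ ∈ SpL ω b L := by
  refine mem_SpL.2 ⟨isSp_of_form hAlt h, fun j => ?_⟩
  rw [h]
  exact (VL b L).add_mem (basis_VL L j)
    (smul_VL (L.mul_mem hc (form_mem hb hAlt (basis_VL L j) hx)) hx)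

/-- `Sp_n(L)` as a subgroup. -/
def SpLgrp (L : Subfield K) : Subgroup (V ≃ₗ[K] V) where
  carrier := SpL ω b L
  one_mem' := mem_SpL.2 ⟨fun v w => rfl, fun j => basis_VL L j⟩
  mul_mem' := fun {g h} hg hh => mem_SpL.2 ⟨fun v w => by
    rw [LinearEquiv.mul_apply, LinearEquiv.mul_apply, hg.1, hh.1],
    fun j => SpL_VL hg ((mem_SpL.1 hh).2 j)⟩
  inv_mem' := fun {g} hg => by
    have hu : ∀ u, g (g⁻¹ u) = u := fun u => by
      rw [← LinearEquiv.mul_apply, mul_inv_cancel]; rfl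
    refine mem_SpL.2 ⟨fun v w => ?_, fun j => (VL_iff hb hAlt).2 fun i => ?_⟩
    · rw [← hg.1, hu, hu]
    · rw [← hg.1, hu]
      exact form_mem hb hAlt (basis_VL L j) ((mem_SpL.1 hg).2 i)

end lattice

/-! ### From the prime field to `L` -/

section span
variable {ω : LinearMap.BilinForm K V} {m : ℕ} {b : Basis (Fin m ⊕ Fin m) K V}
  (hb : IsSymplecticBasis ω b) (hAlt : ω.IsAlt) {G : Subgroup (V ≃ₗ[K] V)}
include hb hAlt

theorem tr_of_sub {L : Subfield K} (hG : SpL ω b L ⊆ G) {v : V} {c : K} (hv : v ∈ VL b L)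
    (hc : c ∈ L) : Tr ω G v c :=
  ⟨Tv hAlt v c, hG (form_SpL hb hAlt hv hc (Tv_apply hAlt v c)), Tv_apply hAlt v c⟩

omit hb in
theorem form_ne_zero_left {v w : V} (h : ω v w ≠ 0) : ω w v ≠ 0 := by
  rw [← hAlt.neg_eq]; exact neg_ne_zero.2 h

/-- Any two nonzero vectors have a common rational non-orthogonal vector. -/
theorem exists_between {L : Subfield K} {v w : V} (hv : v ≠ 0) (hw : w ≠ 0) :
    ∃ z ∈ VL b L, ω v z ≠ 0 ∧ ω z w ≠ 0 := by
  obtain ⟨i, hi⟩ := exists_form_ne hb hAlt hv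
  obtain ⟨j, hj⟩ := exists_form_ne hb hAlt hw
  have hj' := form_ne_zero_left hAlt hj
  by_cases h1 : ω (b i) w = 0
  · by_cases h2 : ω v (b j) = 0
    · refine ⟨b i + b j, (VL b L).add_mem (basis_VL L i) (basis_VL L j), ?_, ?_⟩
      · rwa [map_add, h2, add_zero]
      · rwa [map_add, LinearMap.add_apply, h1, zero_add]
    · exact ⟨b j, basis_VL L j, h2, hj'⟩
  · exact ⟨b i, basis_VL L i, hi, h1⟩

theorem move_one {L : Subfield K} (hT : ∀ v ∈ VL b L, ∀ c ∈ L, Tr ω G v c) {v w : V}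
    (hv : v ∈ VL b L) (hw : w ∈ VL b L) (h : ω v w ≠ 0) :
    ∃ h ∈ G, h v = w ∧ ∀ u, ω u v = ω u w → h u = u :=
  exists_move hAlt h (hT _ ((VL b L).sub_mem hv hw) _ (L.inv_mem (form_mem hb hAlt hv hw)))

theorem move_two {L : Subfield K} (hT : ∀ v ∈ VL b L, ∀ c ∈ L, Tr ω G v c) {v w z : V}
    (hv : v ∈ VL b L) (hz : z ∈ VL b L) (hw : w ∈ VL b L) (h : ω v z ≠ 0) (h' : ω z w ≠ 0) :
    ∃ h ∈ G, h v = w ∧ ∀ u, ω u v = ω u z → ω u z = ω u w → h u = u := by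
  obtain ⟨g, hg, h1, h2⟩ := move_one hb hAlt hT hv hz h
  obtain ⟨g', hg', h1', h2'⟩ := move_one hb hAlt hT hz hw h'
  refine ⟨g' * g, G.mul_mem hg' hg, by rw [LinearEquiv.mul_apply, h1, h1'], fun u hu hu' => ?_⟩
  rw [LinearEquiv.mul_apply, h2 u hu, h2' u hu']

theorem tr_transport (hS : ∀ g ∈ G, IsSp ω g) {L : Subfield K} (hG : SpL ω b L ⊆ G) {v w : V}
    (hv : v ∈ VL b L) (hw : w ∈ VL b L) (hv0 : v ≠ 0) (hw0 : w ≠ 0) {c : K} (h : Tr ω G v c) :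
    Tr ω G w c := by
  obtain ⟨z, hz, h1, h2⟩ := exists_between hb hAlt (L := L) hv0 hw0
  obtain ⟨g, hg, rfl, -⟩ :=
    move_two hb hAlt (fun v hv c hc => tr_of_sub hb hAlt hG hv hc) hv hz hw h1 h2
  exact tr_conj hS hg h

omit hb in
/-- If `G` contains all transvections with parameter in `L` along `v`, `w` and `v + w`, it
contains those along the `L`-combinations of `v` and `w`. -/
theorem full_comb (hS : ∀ g ∈ G, IsSp ω g) {L : Subfield K} {v w : V}
    (hv : ∀ c ∈ L, Tr ω G v c) (hw : ∀ c ∈ L, Tr ω G w c) (hvw : ∀ c ∈ L, Tr ω G (v + w) c)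
    (hd : ω v w ∈ L) {a b : K} (ha : a ∈ L) (hb : b ∈ L) :
    ∀ c ∈ L, Tr ω G (a • v + b • w) c := by
  intro c hc
  by_cases h0 : ω v w = 0
  · have h1 : c * a * b ∈ L := L.mul_mem (L.mul_mem hc ha) hb
    exact tr_comb hAlt h0 (hv _ (L.sub_mem (L.mul_mem hc (L.pow_mem ha 2)) h1))
      (hw _ (L.sub_mem (L.mul_mem hc (L.pow_mem hb 2)) h1)) (hvw _ h1)
  · by_cases ha0 : a = 0
    · subst ha0
      rw [zero_smul, zero_add, tr_smul_iff]
      exact hw _ (L.mul_mem (L.pow_mem hb 2) hc)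
    · have h1 : a • v + b • w = a • (v + (a⁻¹ * b) • w) := by
        rw [smul_add, smul_smul, mul_inv_cancel_left₀ ha0]
      rw [h1, tr_smul_iff]
      obtain ⟨τ, hτ, h⟩ := hw (a⁻¹ * b * (ω v w)⁻¹)
        (L.mul_mem (L.mul_mem (L.inv_mem ha) hb) (L.inv_mem hd))
      have h2 := h v
      rw [inv_mul_cancel_right₀ h0] at h2
      rw [← h2]
      exact tr_conj hS hτ (hv _ (L.mul_mem (L.pow_mem ha 2) hc))

/-- If `G` contains `Sp_n` of the prime field and the transvections along one prime-field vector
`e` with parameters in `L`, then it contains all transvections rational over `L`: `Sp_n` of the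
prime field moves `e` to every nonzero prime-field vector, and coordinates in `L` are reached one
basis vector at a time by `full_comb`. -/
theorem tr_of_VL (hS : ∀ g ∈ G, IsSp ω g) (hG : SpL ω b (⊥ : Subfield K) ⊆ G) {L : Subfield K}
    {e : V} (he : e ∈ VL b ⊥) (he0 : e ≠ 0) (hL : ∀ t ∈ L, Tr ω G e t) :
    ∀ v ∈ VL b L, ∀ c ∈ L, Tr ω G v c := by
  have h0 : ∀ v ∈ VL b ⊥, ∀ c ∈ L, Tr ω G v c := by
    intro v hv c hc
    by_cases hv0 : v = 0
    · rw [hv0]; exact tr_zero_left c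
    · exact tr_transport hb hAlt hS hG he hv he0 hv0 (hL c hc)
  have key : ∀ (s : Finset (Fin m ⊕ Fin m)) (x : Fin m ⊕ Fin m → K), (∀ i, x i ∈ L) →
      ∀ v ∈ VL b ⊥, ∀ c ∈ L, Tr ω G (∑ i ∈ s, x i • b i + v) c := by
    intro s x hx
    induction s using Finset.induction_on with
    | empty => simpa using h0
    | insert j s hj ih =>
      intro v hv
      rw [Finset.sum_insert hj, add_assoc, ← one_smul K (∑ i ∈ s, x i • b i + v)]
      have hmem : ∑ i ∈ s, x i • b i + v ∈ VL b L :=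
        (VL b L).add_mem ((VL b L).sum_mem fun i _ => smul_VL (hx i) (basis_VL L i))
          (VL_mono bot_le hv)
      refine full_comb hAlt hS (h0 _ (basis_VL ⊥ j)) (ih v hv) ?_
        (form_mem hb hAlt (basis_VL L j) hmem) (hx j) L.one_mem
      have := ih (b j + v) ((VL b ⊥).add_mem (basis_VL ⊥ j) hv)
      convert this using 3
      abel
  intro v hv c hc
  have := key Finset.univ (fun i => b.repr v i) hv 0 (VL b ⊥).zero_mem c hc
  rwa [b.sum_repr, add_zero] at this

end span

/-! ### Generation of `Sp_n(L)` by transvections -/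

section generation
variable {ω : LinearMap.BilinForm K V} {m : ℕ} {b : Basis (Fin m ⊕ Fin m) K V}
  (hb : IsSymplecticBasis ω b) (hAlt : ω.IsAlt) {H : Subgroup (V ≃ₗ[K] V)}
include hb hAlt

/-- A product of transvections brings the images under `g` of a hyperbolic pair of basis vectors
back in place, without disturbing the vectors fixed by `g` and orthogonal to the pair. -/
theorem generation_step {L : Subfield K} (hH : ∀ h ∈ H, h ∈ SpL ω b L)
    (hT : ∀ v ∈ VL b L, ∀ c ∈ L, Tr ω H v c) {g : V ≃ₗ[K] V} (hg : g ∈ SpL ω b L) (k : Fin m) :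
    ∃ s ∈ H, (s * g) (b (Sum.inl k)) = b (Sum.inl k) ∧ (s * g) (b (Sum.inr k)) = b (Sum.inr k) ∧
      ∀ u, g u = u → ω u (b (Sum.inl k)) = 0 → ω u (b (Sum.inr k)) = 0 → (s * g) u = u := by
  set e := b (Sum.inl k)
  set f := b (Sum.inr k)
  have hef : ω e f = 1 := by simpa using hb.2.2 k k
  have hfe : ω f e = -1 := by rw [← hAlt.neg_eq, hef]
  have he : e ∈ VL b L := basis_VL L _
  have hf : f ∈ VL b L := basis_VL L _
  -- first move `g e` back to `e`
  have h1 : ∃ s ∈ H, s (g e) = e ∧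
      ∀ u, g u = u → ω u e = 0 → ω u f = 0 → s u = u := by
    have hge := SpL_VL hg he
    have hgf := SpL_VL hg hf
    have hgu : ∀ u, g u = u → ∀ x, ω u (g x) = ω u x := fun u hu x => by
      conv_lhs => rw [← hu]
      exact hg.1 u x
    by_cases h0 : ω (g e) e = 0
    · by_cases h2 : ω (g e) f = 0
      · by_cases h3 : ω (g f) e = 0
        · obtain ⟨s, hs, h4, h5⟩ := move_two hb hAlt hT hge ((VL b L).add_mem hf hgf) he
            (by rw [map_add, h2, hg.1, hef]; simp)
            (by rw [map_add, LinearMap.add_apply, h3, hfe]; simp)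
          exact ⟨s, hs, h4, fun u hu hue huf => h5 u (by simp [hgu u hu, hue, huf])
            (by simp [hgu u hu, hue, huf])⟩
        · obtain ⟨s, hs, h4, h5⟩ := move_two hb hAlt hT hge hgf he
            (by rw [hg.1, hef]; simp) h3
          exact ⟨s, hs, h4, fun u hu hue huf => h5 u (by simp [hgu u hu, hue, huf])
            (by simp [hgu u hu, hue, huf])⟩
      · obtain ⟨s, hs, h4, h5⟩ := move_two hb hAlt hT hge hf he h2 (by rw [hfe]; simp)
        exact ⟨s, hs, h4, fun u hu hue huf => h5 u (by simp [hgu u hu, hue, huf])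
            (by simp [hue, huf])⟩
    · obtain ⟨s, hs, h4, h5⟩ := move_one hb hAlt hT hge he h0
      exact ⟨s, hs, h4, fun u hu hue huf => h5 u (by simp [hgu u hu, hue])⟩
  obtain ⟨s, hs, hse, hsu⟩ := h1
  have hsg : s * g ∈ SpL ω b L := (SpLgrp hb hAlt L).mul_mem (hH s hs) hg
  have hsge : (s * g) e = e := by rw [LinearEquiv.mul_apply, hse]
  have hsgu : ∀ u, g u = u → ω u e = 0 → ω u f = 0 → (s * g) u = u := fun u hu hue huf => by
    rw [LinearEquiv.mul_apply, hu, hsu u hu hue huf]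
  set g' := s * g
  -- then move `g' f` back to `f`, fixing `e`
  have h2 : ∃ s' ∈ H, s' (g' f) = f ∧ s' e = e ∧
      ∀ u, g' u = u → ω u e = 0 → ω u f = 0 → s' u = u := by
    have hgf := SpL_VL hsg hf
    have hgu : ∀ u, g' u = u → ∀ x, ω u (g' x) = ω u x := fun u hu x => by
      conv_lhs => rw [← hu]
      exact hsg.1 u x
    have hegf := hgu e hsge f
    by_cases h0 : ω (g' f) f = 0
    · obtain ⟨s, hs, h4, h5⟩ := move_two hb hAlt hT hgf ((VL b L).add_mem hf he) hf
        (by rw [map_add, h0, ← hAlt.neg_eq e, hegf, hef]; simp)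
        (by rw [map_add, LinearMap.add_apply, hAlt.self_eq_zero, hef]; simp)
      exact ⟨s, hs, h4, h5 e (by simp [hegf, hAlt.self_eq_zero])
        (by simp [hAlt.self_eq_zero]), fun u hu hue huf =>
          h5 u (by simp [hgu u hu, hue, huf]) (by simp [hue, huf])⟩
    · obtain ⟨s, hs, h4, h5⟩ := move_one hb hAlt hT hgf hf h0
      exact ⟨s, hs, h4, h5 e hegf, fun u hu hue huf => h5 u (by simp [hgu u hu, huf])⟩
  obtain ⟨s', hs', hsf, hse', hsu'⟩ := h2
  refine ⟨s' * s, H.mul_mem hs' hs, ?_, ?_, fun u hu hue huf => ?_⟩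
  · rw [mul_assoc, LinearEquiv.mul_apply, hsge, hse']
  · rw [mul_assoc, LinearEquiv.mul_apply, hsf]
  · have := hsgu u hu hue huf
    rw [mul_assoc, LinearEquiv.mul_apply, this, hsu' u this hue huf]

/-- `Sp_n(L)` is generated by its transvections. -/
theorem SpL_le {L : Subfield K} (hH : ∀ h ∈ H, h ∈ SpL ω b L)
    (hT : ∀ v ∈ VL b L, ∀ c ∈ L, Tr ω H v c) {g : V ≃ₗ[K] V} (hg : g ∈ SpL ω b L) : g ∈ H := by
  have key : ∀ t : Finset (Fin m), ∃ s ∈ H, ∀ i ∈ t,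
      (s * g) (b (Sum.inl i)) = b (Sum.inl i) ∧ (s * g) (b (Sum.inr i)) = b (Sum.inr i) := by
    intro t
    induction t using Finset.induction_on with
    | empty => exact ⟨1, H.one_mem, by simp⟩
    | insert k t hk ih =>
      obtain ⟨s, hs, h⟩ := ih
      obtain ⟨s', hs', h1, h2, h3⟩ := generation_step hb hAlt hH hT
        ((SpLgrp hb hAlt L).mul_mem (hH s hs) hg) k
      refine ⟨s' * s, H.mul_mem hs' hs, fun i hi => ?_⟩
      rw [mul_assoc]
      rcases Finset.mem_insert.1 hi with rfl | hi
      · exact ⟨h1, h2⟩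
      · have hik : i ≠ k := fun h => hk (h ▸ hi)
        have hli : ω (b (Sum.inr i)) (b (Sum.inl k)) = 0 := by
          rw [← hAlt.neg_eq, hb.2.2, if_neg hik.symm, neg_zero]
        exact ⟨h3 _ (h i hi).1 (hb.1 _ _) (by rw [hb.2.2, if_neg hik]),
          h3 _ (h i hi).2 hli (hb.2.1 _ _)⟩
  obtain ⟨s, hs, h⟩ := key Finset.univ
  have h1 : s * g = 1 := by
    apply LinearEquiv.toLinearMap_injective
    refine b.ext fun i => ?_
    rcases i with i | i
    · exact (h i (Finset.mem_univ i)).1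
    · exact (h i (Finset.mem_univ i)).2
  rw [← inv_eq_of_mul_eq_one_right h1]
  exact H.inv_mem hs

end generation

/-! ### Rationality of the transvections -/

section rationality
variable [Fintype K] {ω : LinearMap.BilinForm K V} {m : ℕ} {b : Basis (Fin m ⊕ Fin m) K V}
  (hb : IsSymplecticBasis ω b) (hAlt : ω.IsAlt) {G : Subgroup (V ≃ₗ[K] V)}
include hb hAlt

/-- Suppose `G` contains all transvections rational over `L`, and only parameters in `L` occur
along the basis vectors. Then every transvection in `G` is rational over `L`, after scaling its
axis vector. A basis vector `e` not orthogonal to `x` and the plane of `e` and `x` are used: a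
torus element of that plane moves rational vectors, and the parameters of the resulting
transvections along `e` force the component of `x` orthogonal to a rational hyperbolic plane to
be rational; what remains is an element of trace two in a rational hyperbolic plane. -/
theorem tr_rational {L : Subfield K} (hS : ∀ g ∈ G, IsSp ω g)
    (hT : ∀ v ∈ VL b L, ∀ c ∈ L, Tr ω G v c) (hL : ∀ i, ∀ t, Tr ω G (b i) t → t ∈ L)
    (h5 : 5 ≤ Nat.card L) (h2 : (2 : K) ≠ 0) {x : V} {c : K} (hx : x ≠ 0) (hc : c ≠ 0)
    (h : Tr ω G x c) : ∃ μ : K, μ ≠ 0 ∧ μ⁻¹ • x ∈ VL b L ∧ μ ^ 2 * c ∈ L := by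
  have h2L : (2 : K) ∈ L := by exact_mod_cast natCast_mem L 2
  obtain ⟨i, hi⟩ := exists_form_ne hb hAlt hx
  set e := b i
  obtain ⟨f, hf, hef⟩ : ∃ f ∈ VL b L, ω e f = 1 := by
    refine ⟨sg K i • b i.swap, smul_VL (sg_mem L i) (basis_VL L _), ?_⟩
    rw [map_smul, smul_eq_mul, form_basis hb hAlt, if_pos rfl, sg_mul]
  have he : e ∈ VL b L := basis_VL L i
  have hfe : ω f e = -1 := by rw [← hAlt.neg_eq, hef]
  have hee := hAlt.self_eq_zero e
  have hff := hAlt.self_eq_zero f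
  have hLe : ∀ t, t ∈ L ↔ PP ω G e f 1 t 0 1 := fun t => by
    rw [pp_upper hAlt]
    exact ⟨fun ht => hT e he _ (L.neg_mem ht), fun ht => by simpa using L.neg_mem (hL i _ ht)⟩
  have hLf : ∀ t ∈ L, PP ω G e f 1 0 t 1 := fun t ht => pp_lower.2 (hT f hf t ht)
  -- scale `x` so that `ω e x = 1`
  have hi' := form_ne_zero_left hAlt hi
  refine ⟨ω e x, hi', ?_⟩
  set μ := ω e x
  obtain ⟨x', hx'⟩ : ∃ x', x' = μ⁻¹ • x := ⟨_, rfl⟩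
  have hex : ω e x' = 1 := by
    rw [hx', map_smul, smul_eq_mul]; exact inv_mul_cancel₀ hi'
  have hxe : ω x' e = -1 := by rw [← hAlt.neg_eq, hex]
  have hxT : Tr ω G x' (μ ^ 2 * c) := by
    rw [hx', tr_smul_iff]
    convert h using 1
    field_simp
  rw [← hx']
  obtain ⟨c', hc'⟩ : ∃ c', c' = μ ^ 2 * c := ⟨_, rfl⟩
  have hc0 : c' ≠ 0 := by rw [hc']; exact mul_ne_zero (pow_ne_zero 2 hi') hc
  rw [← hc'] at hxT ⊢
  -- a torus element of the plane `⟨e, x'⟩`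
  have hLx : ∀ t, t ∈ L ↔ PP ω G e x' 1 t 0 1 := fun t => by
    rw [pp_upper hAlt]
    exact ⟨fun ht => hT e he _ (L.neg_mem ht), fun ht => by simpa using L.neg_mem (hL i _ ht)⟩
  obtain ⟨l, hlL, hl0, hl1, t, hlt, τ, hτ, hτ1⟩ :=
    (pp_isSL2 hAlt hex).exists_torus hLx h5 (pp_lower.2 hxT) hc0
  have hl1' : l - 1 ≠ 0 := sub_ne_zero.2 hl1
  have hτe : τ e = l • e := by
    rw [hτ1, hex, hee]; module
  -- the element `e ↦ -e`, `f ↦ -f`, trivial on the complement of the plane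
  obtain ⟨-, σ, hσ, hσ1⟩ := IsSL2.diagL (pp_isSL2 hAlt hef) hLe hLf (L.neg_mem L.one_mem)
    (neg_ne_zero.2 one_ne_zero)
  have hσe : σ e = -e := by
    rw [hσ1, hef, hee]; module
  -- the pairing with `x'` of rational vectors orthogonal to the plane `⟨e, f⟩` is rational
  have hperp : ∀ y ∈ VL b L, ω e y = 0 → ω y f = 0 → ω y x' ∈ L := by
    intro y hy hye hyf
    have hye' : ω y e = 0 := by rw [← hAlt.neg_eq, hye, neg_zero]
    have hτy : τ y = y + ((l - 1) * ω y x') • e := by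
      rw [hτ1, hye]; module
    have hσy : σ y = y := by rw [hσ1, hye, hyf]; module
    have hsq : ∀ j ∈ L, (l * j + (l - 1) * ω y x') ^ 2 ∈ L := by
      intro j hj
      have e1 : τ (y + j • e) = y + (l * j + (l - 1) * ω y x') • e := by
        rw [map_add, map_smul, hτy, hτe]; module
      have t1 := tr_conj hS hτ (hT (y + j • e) ((VL b L).add_mem hy (smul_VL hj he)) 1 L.one_mem)
      rw [e1] at t1
      have t2 := tr_conj hS hσ t1
      have e2 : σ (y + (l * j + (l - 1) * ω y x') • e) =
          y - (l * j + (l - 1) * ω y x') • e := by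
        rw [map_add, map_smul, hσy, hσe]; module
      rw [e2] at t2
      have t3 := hL i _ (tr_sq hAlt hye' t1 t2 (hT y hy (-2) (L.neg_mem h2L)))
      have := L.mul_mem (L.inv_mem h2L) t3
      rwa [inv_mul_cancel_left₀ h2] at this
    have s0 := hsq 0 L.zero_mem
    have s1 := hsq 1 L.one_mem
    have s2 := L.div_mem (L.sub_mem (L.sub_mem s1 s0) (L.mul_mem hlL hlL))
      (L.mul_mem (L.mul_mem h2L hlL) (L.sub_mem hlL L.one_mem))
    convert s2 using 1
    field_simp
    ring
  -- `x' = f' + κe` with `f'` rational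
  obtain ⟨κ, hκ⟩ : ∃ κ, κ = ω x' f := ⟨_, rfl⟩
  have hfx : ω f x' = -κ := by rw [hκ, hAlt.neg_eq]
  obtain ⟨f', hf'⟩ : ∃ f', f' = x' - κ • e := ⟨_, rfl⟩
  have hf'L : f' ∈ VL b L := by
    refine (VL_iff hb hAlt).2 fun j => ?_
    have hj := basis_VL (b := b) L j
    have hjf := form_mem hb hAlt hj hf
    have hje := form_mem hb hAlt he hj
    -- project `b j` to the orthogonal complement of `⟨e, f⟩`
    have h1 := hperp (b j - ω (b j) f • e - ω e (b j) • f)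
      ((VL b L).sub_mem ((VL b L).sub_mem hj (smul_VL hjf he)) (smul_VL hje hf))
      (by simp [hee, hef]) (by simp [hef, hff])
    have h3 : ω f' (b j) = -(ω (b j - ω (b j) f • e - ω e (b j) • f) x') - ω (b j) f := by
      rw [hf']
      simp only [map_sub, map_smul, LinearMap.sub_apply, LinearMap.smul_apply, smul_eq_mul, hex,
        hfx]
      rw [← hAlt.neg_eq (b j) x']
      ring
    rw [h3]
    exact L.sub_mem (L.neg_mem h1) hjf
  have hef' : ω e f' = 1 := by
    rw [hf', map_sub, map_smul, hee, hex]; simp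
  have hLe' : ∀ t, t ∈ L ↔ PP ω G e f' 1 t 0 1 := fun t => by
    rw [pp_upper hAlt]
    exact ⟨fun ht => hT e he _ (L.neg_mem ht), fun ht => by simpa using L.neg_mem (hL i _ ht)⟩
  have hLf' : ∀ t ∈ L, PP ω G e f' 1 0 t 1 := fun t ht => pp_lower.2 (hT f' hf'L t ht)
  have hxf : x' = f' + κ • e := by rw [hf']; abel
  have hP : PP ω G e f' (1 + c' * κ) (-(c' * κ ^ 2)) c' (1 - c' * κ) := by
    obtain ⟨ρ, hρ, hρ1⟩ := hxT
    refine ⟨by ring, ρ, hρ, fun u => ?_⟩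
    rw [hρ1, hxf]
    simp only [map_add, map_smul, smul_eq_mul]
    rw [← hAlt.neg_eq e u]
    module
  obtain ⟨m1, -, m3, -⟩ :=
    IsSL2.mem_of_trace_two (pp_isSL2 hAlt hef') hLe' hLf' h5 h2 hP (by ring)
  refine ⟨?_, m3⟩
  have hκL : κ ∈ L := by
    have := L.div_mem (L.sub_mem m1 L.one_mem) m3
    convert this using 1
    field_simp
    ring
  rw [hxf]
  exact (VL b L).add_mem hf'L (smul_VL hκL he)

/-- If a group `G` of isometries contains `Sp_n` of the prime field in the basis `b`, its
transvections generate `Sp_n(L)` in the same basis for some subfield `L`. -/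
theorem core (hNd : ω.Nondegenerate) {ℓ : ℕ} (hℓp : ℓ.Prime) (hchar : CharP K ℓ) (hℓ5 : 5 ≤ ℓ)
    (hm : 0 < m) (hS : ∀ g ∈ G, IsSp ω g) (hG : SpL ω b (⊥ : Subfield K) ⊆ G) :
    ∃ L : Subfield K,
      ((Subgroup.closure {τ : V ≃ₗ[K] V | τ ∈ G ∧ IsSymplecticTransvection ω τ} :
        Subgroup (V ≃ₗ[K] V)) : Set (V ≃ₗ[K] V)) = SpL ω b L := by
  have h2 : (2 : K) ≠ 0 := by
    intro h
    have : ((2 : ℕ) : K) = 0 := by exact_mod_cast h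
    rw [CharP.cast_eq_zero_iff K ℓ] at this
    have := Nat.le_of_dvd (by norm_num) this
    omega
  have hodd : Odd (Fintype.card K) := by
    have := hchar
    obtain ⟨n, -, hn⟩ := FiniteField.card K ℓ
    rw [hn]
    exact (hℓp.odd_of_ne_two (by omega)).pow
  set e := b (Sum.inl (⟨0, hm⟩ : Fin m))
  set f := b (Sum.inr (⟨0, hm⟩ : Fin m))
  have hef : ω e f = 1 := by simpa using hb.2.2 ⟨0, hm⟩ ⟨0, hm⟩
  have hTb := fun {v : V} (hv : v ∈ VL b ⊥) {c : K} hc => tr_of_sub hb hAlt hG (c := c) hv hc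
  have h1 : PP ω G e f 1 1 0 1 :=
    (pp_upper hAlt).2 (hTb (basis_VL ⊥ _) (neg_mem (one_mem _)))
  have h1' : PP ω G e f 1 0 1 1 := pp_lower.2 (hTb (basis_VL ⊥ _) (one_mem _))
  obtain ⟨L, hL⟩ := (pp_isSL2 hAlt hef).exists_subfield hodd h1 h1' one_ne_zero
  have hLe : ∀ t, Tr ω G e t ↔ t ∈ L := fun t => by
    rw [← neg_mem_iff (S := Subfield K), hL, pp_upper hAlt, neg_neg]
  have hne : ∀ i, b i ≠ 0 := fun i => b.ne_zero i
  have hT := tr_of_VL hb hAlt hS hG (basis_VL ⊥ _) (hne _) (fun t ht => (hLe t).2 ht)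
  have hLb : ∀ i, ∀ t, Tr ω G (b i) t → t ∈ L := fun i t ht => (hLe t).1
    (tr_transport hb hAlt hS hG (basis_VL ⊥ _) (basis_VL ⊥ _) (hne _) (hne _) ht)
  have h5 : 5 ≤ Nat.card L := by
    refine hℓ5.trans ?_
    have : CharP L ℓ := (L.subtype.charP_iff L.subtype.injective ℓ).2 hchar
    have hinj : Function.Injective fun i : Fin ℓ => ((i : ℕ) : L) := fun i j hij =>
      Fin.ext (CharP.natCast_injOn_Iio L ℓ i.2 j.2 hij)
    simpa using Nat.card_le_card_of_injective _ hinj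
  refine ⟨L, ?_⟩
  set H := Subgroup.closure {τ : V ≃ₗ[K] V | τ ∈ G ∧ IsSymplecticTransvection ω τ}
  have hH : H ≤ SpLgrp hb hAlt L := by
    refine (Subgroup.closure_le _).2 ?_
    rintro τ ⟨hτ, hτt⟩
    obtain ⟨x, c, h⟩ := transvection_form hAlt hNd hτt
    change τ ∈ SpL ω b L
    by_cases hxc : x = 0 ∨ c = 0
    · have : τ = 1 := by
        ext u
        rcases hxc with rfl | rfl <;> simp [h]
      rw [this]
      exact (SpLgrp hb hAlt L).one_mem
    · push Not at hxc
      obtain ⟨μ, hμ, hx, hc⟩ := tr_rational hb hAlt hS hT hLb h5 h2 hxc.1 hxc.2 ⟨τ, hτ, h⟩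
      refine form_SpL hb hAlt hx hc fun u => ?_
      rw [h, map_smul, smul_eq_mul, smul_smul]
      congr 2
      field_simp
  apply Set.Subset.antisymm
  · exact hH
  · intro g hg
    refine SpL_le hb hAlt (H := H) (fun h hh => hH hh) (fun v hv c hc => ?_) hg
    obtain ⟨τ, hτ, h⟩ := hT v hv c hc
    exact ⟨τ, Subgroup.subset_closure ⟨hτ, isSympTrans_of_form hAlt h⟩, h⟩

end rationality

theorem isSp_conj {ω : LinearMap.BilinForm K V} {A τ : V ≃ₗ[K] V} (hA : IsGSp ω A) :
    IsSp ω (A * τ * A⁻¹) ↔ IsSp ω τ := by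
  obtain ⟨α, hα⟩ := hA
  have hu : ∀ u, A (A⁻¹ u) = u := fun u => by
    rw [← LinearEquiv.mul_apply, mul_inv_cancel]; rfl
  have hu' : ∀ u, A⁻¹ (A u) = u := fun u => by
    rw [← LinearEquiv.mul_apply, inv_mul_cancel]; rfl
  constructor
  · intro h v w
    have := h (A v) (A w)
    simp only [LinearEquiv.mul_apply, hu', hα] at this
    exact mul_left_cancel₀ α.ne_zero this
  · intro h v w
    simp only [LinearEquiv.mul_apply]
    rw [hα, h, ← hα, hu, hu]

theorem isSymplecticTransvection_conj {ω : LinearMap.BilinForm K V} {A τ : V ≃ₗ[K] V}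
    (hA : IsGSp ω A) :
    IsSymplecticTransvection ω (A * τ * A⁻¹) ↔ IsSymplecticTransvection ω τ := by
  have hu : ∀ u, A (A⁻¹ u) = u := fun u => by
    rw [← LinearEquiv.mul_apply, mul_inv_cancel]; rfl
  have hu' : ∀ u, A⁻¹ (A u) = u := fun u => by
    rw [← LinearEquiv.mul_apply, inv_mul_cancel]; rfl
  refine and_congr ⟨?_, ?_⟩ (isSp_conj hA)
  · rintro ⟨u, h⟩
    refine ⟨A⁻¹ u, fun v => ?_⟩
    obtain ⟨c, hc⟩ := h (A v)
    refine ⟨c, A.injective ?_⟩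
    rw [map_sub, map_smul, hu, ← hc]
    simp only [LinearEquiv.mul_apply, hu']
  · rintro ⟨u, h⟩
    refine ⟨A u, fun v => ?_⟩
    obtain ⟨c, hc⟩ := h (A⁻¹ v)
    refine ⟨c, ?_⟩
    rw [← map_smul, ← hc, map_sub, hu]
    rfl

end Huge

/-- **Corollary (equivalence of the two notions of hugeness).**
Let `K` be a finite field of characteristic `ℓ ≥ 5`, `V` a symplectic `K`-vector space of
dimension `n`, and `G ≤ GSp(V)` a subgroup containing a nontrivial symplectic transvection.
Then `G` contains a conjugate (in `GSp(V)`) of `Sp_n(𝔽_ℓ)` (the prime field being the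
bottom subfield of `K`) if and only if there is a subfield `L ⊆ K` such that the subgroup
generated by the symplectic transvections of `G` is conjugate in `GSp(V)` to `Sp_n(L)`. -/
theorem huge_equivalence
    {K : Type*} [Field K] [Fintype K] {ℓ : ℕ} (hℓp : ℓ.Prime) (hchar : CharP K ℓ)
    (hℓ5 : 5 ≤ ℓ)
    {V : Type*} [AddCommGroup V] [Module K V] [FiniteDimensional K V]
    {n : ℕ} (hn : finrank K V = n)
    (ω : LinearMap.BilinForm K V) (hAlt : ω.IsAlt) (hNd : ω.Nondegenerate)
    (G : Subgroup (V ≃ₗ[K] V)) (hG : ∀ g ∈ G, IsGSp ω g)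
    (hTrans : ∃ τ ∈ G, τ ≠ 1 ∧ IsSymplecticTransvection ω τ) :
    -- (i) `G` contains a conjugate of `Sp_n(𝔽_ℓ)`
    (∃ (m : ℕ) (b : Basis (Fin m ⊕ Fin m) K V), IsSymplecticBasis ω b ∧
      ∃ A : V ≃ₗ[K] V, IsGSp ω A ∧
        (fun x => A * x * A⁻¹) '' SpL ω b (⊥ : Subfield K) ⊆ (G : Set (V ≃ₗ[K] V)))
    ↔
    -- (ii) the transvections of `G` generate a conjugate of `Sp_n(L)` for a subfield `L ⊆ K`
    (∃ (L : Subfield K) (m : ℕ) (b : Basis (Fin m ⊕ Fin m) K V), IsSymplecticBasis ω b ∧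
      ∃ A : V ≃ₗ[K] V, IsGSp ω A ∧
        ((Subgroup.closure {τ : V ≃ₗ[K] V | τ ∈ G ∧ IsSymplecticTransvection ω τ} :
            Subgroup (V ≃ₗ[K] V)) : Set (V ≃ₗ[K] V)) =
          (fun x => A * x * A⁻¹) '' SpL ω b L) := by
  constructor
  · rintro ⟨m, b, hb, A, hA, hsub⟩
    -- the elements of `A⁻¹ G A` of multiplier one
    let G₀ : Subgroup (V ≃ₗ[K] V) :=
      { carrier := {g | A * g * A⁻¹ ∈ G ∧ IsSp ω g}
        one_mem' := ⟨by simp [G.one_mem], fun v w => rfl⟩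
        mul_mem' := fun {g h} hg hh => ⟨by
          have := G.mul_mem hg.1 hh.1
          convert this using 1; group, fun v w => by
          rw [LinearEquiv.mul_apply, LinearEquiv.mul_apply, hg.2, hh.2]⟩
        inv_mem' := fun {g} hg => ⟨by
          have := G.inv_mem hg.1
          convert this using 1; group, fun v w => by
          have hu : ∀ u, g (g⁻¹ u) = u := fun u => by
            rw [← LinearEquiv.mul_apply, mul_inv_cancel]; rfl
          rw [← hg.2, hu, hu]⟩ }
    have hm : 0 < m := by
      rcases Nat.eq_zero_or_pos m with rfl | hm
      · obtain ⟨τ, -, hτ, -⟩ := hTrans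
        refine absurd (LinearEquiv.toLinearMap_injective (b.ext fun i => ?_)) hτ
        rcases i with i | i <;> exact i.elim0
      · exact hm
    have hG₀ : SpL ω b (⊥ : Subfield K) ⊆ G₀ := fun g hg => ⟨hsub ⟨g, hg, rfl⟩, hg.1⟩
    obtain ⟨L, hL⟩ := Huge.core hb hAlt hNd hℓp hchar hℓ5 hm (G := G₀) (fun g hg => hg.2) hG₀
    refine ⟨L, m, b, hb, A, hA, ?_⟩
    have hset : {τ : V ≃ₗ[K] V | τ ∈ G ∧ IsSymplecticTransvection ω τ} =
        (MulAut.conj A).toMonoidHom '' {τ | τ ∈ G₀ ∧ IsSymplecticTransvection ω τ} := by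
      ext τ
      constructor
      · rintro ⟨hτ, ht⟩
        have h1 : A * (A⁻¹ * τ * A) * A⁻¹ = τ := by group
        have ht' : IsSymplecticTransvection ω (A⁻¹ * τ * A) := by
          rwa [← Huge.isSymplecticTransvection_conj hA, h1]
        exact ⟨A⁻¹ * τ * A, ⟨⟨by rwa [h1], ht'.2⟩, ht'⟩, h1⟩
      · rintro ⟨τ, ⟨⟨hτ, -⟩, ht⟩, rfl⟩
        exact ⟨hτ, (Huge.isSymplecticTransvection_conj hA).2 ht⟩
    rw [hset, ← MonoidHom.map_closure, Subgroup.coe_map, hL]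
    rfl
  · rintro ⟨L, m, b, hb, A, hA, h⟩
    refine ⟨m, b, hb, A, hA, ?_⟩
    refine (Set.image_mono fun g hg => ?_).trans
      (h.symm.subset.trans ((Subgroup.closure_le G).2 fun τ hτ => hτ.1))
    exact ⟨hg.1, fun i j => (bot_le : (⊥ : Subfield K) ≤ L) (hg.2 i j)⟩
end

section
/- Let K be a field, V a symplectic K-vector space, and H ≤ Sp(V) a subgroup which is generated by the symplectic transvections it contains. Let W ⊆ V be an H-stable subspace on which H acts irreducibly and nontrivially (i.e. some element of H does not restrict to the identity on W). Then W is spanned by the set {u ∈ W : T_u[λ] ∈ H for some λ ∈ K×}. -/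
/-!
Every nontrivial symplectic transvection is some `T_u[λ]` with `λ ≠ 0`
(`exists_eq_Tmap`), and `g T_u[λ] g⁻¹ = T_{g u}[λ]` for symplectic `g` (`Tmap_conj`).
The second fact makes the span `S` of the directions lying in `W` an `H`-stable subspace of `W`,
so irreducibility leaves only `S = ⊥` or `S = W`. Since `H` is generated by its transvections and
acts nontrivially on `W`, some `T_u[λ] ∈ H` moves a vector `w ∈ W`; then
`T_u[λ] w - w = λ ω(w, u) u` is a nonzero multiple of `u` lying in `W`. Hence `0 ≠ u ∈ S`,
which excludes `S = ⊥`.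
-/

open Module

variable {K : Type*} [Field K] {V : Type*} [AddCommGroup V] [Module K V]

lemma Tmap_apply_eq {K : Type*} [Field K] {V : Type*} [AddCommGroup V] [Module K V]
    (ω : LinearMap.BilinForm K V) (u : V) (c : K) (v : V) :
    Tmap ω u c v = v + (c * ω v u) • u := by
  simp [Tmap, mul_smul]

/-- A symplectic transvection other than the identity is `T_u[λ]` with `λ ≠ 0`. Writing
`τ v = v + f v • u`, invariance of `ω` gives `f w * ω v u = f v * ω w u`, so `f` is proportional
to `ω · u`. -/
lemma exists_eq_Tmap {K : Type*} [Field K] {V : Type*} [AddCommGroup V] [Module K V]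
    (ω : LinearMap.BilinForm K V) (hAlt : ω.IsAlt) (hNd : ω.Nondegenerate)
    (τ : V ≃ₗ[K] V) (hτ : IsSymplecticTransvection ω τ) {x : V} (hx : τ x ≠ x) :
    ∃ (u : V) (lam : K), lam ≠ 0 ∧ (τ : V →ₗ[K] V) = Tmap ω u lam := by
  obtain ⟨⟨u, hu⟩, hsp⟩ := hτ
  choose f hf using hu
  have hτv (v : V) : τ v = v + f v • u := by rw [← hf v]; abel
  have hu0 : u ≠ 0 := by
    rintro rfl
    exact hx (by simpa using hτv x)
  have key (v w : V) : f w * ω v u = f v * ω w u := by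
    have h := hsp v w
    have h1 : ω u u = 0 := hAlt u
    have h2 : ω u w = - ω w u := (LinearMap.BilinForm.IsAlt.neg_eq hAlt w u).symm
    rw [hτv, hτv] at h
    simp only [map_add, map_smul, LinearMap.add_apply, LinearMap.smul_apply, smul_eq_mul,
      h1, h2] at h
    linear_combination h
  obtain ⟨w₀, hw₀⟩ : ∃ w, ω w u ≠ 0 := by
    by_contra! h
    exact hu0 (hNd.2 u h)
  have hfv (v : V) : f v = f w₀ / ω w₀ u * ω v u := by
    field_simp
    linear_combination -key v w₀
  refine ⟨u, f w₀ / ω w₀ u, fun h0 => hx ?_, ?_⟩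
  · rw [hτv, hfv, h0]; simp
  · ext v
    rw [Tmap_apply_eq, ← hfv]
    exact hτv v

lemma Tmap_conj {K : Type*} [Field K] {V : Type*} [AddCommGroup V] [Module K V]
    (ω : LinearMap.BilinForm K V) (g τ : V ≃ₗ[K] V) (hg : IsSp ω g) (u : V) (lam : K)
    (hτ : (τ : V →ₗ[K] V) = Tmap ω u lam) :
    ((g * τ * g⁻¹ : V ≃ₗ[K] V) : V →ₗ[K] V) = Tmap ω (g u) lam := by
  ext v
  obtain ⟨y, rfl⟩ := g.surjective v
  have h : τ y = y + (lam * ω y u) • u := by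
    rw [← Tmap_apply_eq, ← hτ]; rfl
  have h2 : (g⁻¹ : V ≃ₗ[K] V) (g y) = y := g.symm_apply_apply y
  rw [Tmap_apply_eq, hg]
  simp [h2, h]

/-- **Lemma (an irreducible constituent is spanned by transvection directions).**
Let `H ≤ Sp(V)` be generated by the symplectic transvections it contains, and let `W ⊆ V` be
an `H`-stable subspace on which `H` acts irreducibly and nontrivially. Then `W` is spanned by
the directions `u ∈ W` of the transvections `T_u[λ] ∈ H` (with `λ ≠ 0`). -/
theorem constituent_spanned_by_directions
    {K : Type*} [Field K] {V : Type*} [AddCommGroup V] [Module K V]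
    (ω : LinearMap.BilinForm K V) (hAlt : ω.IsAlt) (hNd : ω.Nondegenerate)
    (H : Subgroup (V ≃ₗ[K] V)) (hHSp : ∀ g ∈ H, IsSp ω g)
    (hgen : Subgroup.closure {τ : V ≃ₗ[K] V | τ ∈ H ∧ IsSymplecticTransvection ω τ} = H)
    (W : Submodule K V) (hstab : ∀ g ∈ H, W.map (g : V →ₗ[K] V) = W)
    (hirr : ∀ S : Submodule K V, S ≤ W → (∀ g ∈ H, S.map (g : V →ₗ[K] V) = S) →
      S = ⊥ ∨ S = W)
    (hnontriv : ∃ g ∈ H, ∃ w ∈ W, g w ≠ w) :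
    Submodule.span K
      {u : V | u ∈ W ∧ ∃ lam : K, lam ≠ 0 ∧ ∃ τ ∈ H, (τ : V →ₗ[K] V) = Tmap ω u lam} = W := by
  have hWmem : ∀ g ∈ H, ∀ w ∈ W, g w ∈ W := fun g hg w hw =>
    hstab g hg ▸ Submodule.mem_map_of_mem (f := (g : V →ₗ[K] V)) hw
  set D : Set V :=
    {u : V | u ∈ W ∧ ∃ lam : K, lam ≠ 0 ∧ ∃ τ ∈ H, (τ : V →ₗ[K] V) = Tmap ω u lam} with hD
  have hle : ∀ g ∈ H, (Submodule.span K D).map (g : V →ₗ[K] V) ≤ Submodule.span K D := by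
    intro g hg
    rw [Submodule.map_span, Submodule.span_le]
    rintro _ ⟨u, ⟨huW, lam, hlam, τ, hτ, hτu⟩, rfl⟩
    exact Submodule.subset_span ⟨hWmem g hg u huW, lam, hlam, g * τ * g⁻¹,
      H.mul_mem (H.mul_mem hg hτ) (H.inv_mem hg), Tmap_conj ω g τ (hHSp g hg) u lam hτu⟩
  refine (hirr (Submodule.span K D) (Submodule.span_le.2 fun u hu => hu.1) ?_).resolve_left ?_
  · refine fun g hg => le_antisymm (hle g hg) fun x hx => ?_
    exact ⟨(g⁻¹ : V ≃ₗ[K] V) x, hle _ (H.inv_mem hg) (Submodule.mem_map_of_mem hx),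
      g.apply_symm_apply x⟩
  · intro hbot
    -- With no nonzero direction in `W`, every generator of `H` fixes `W` pointwise.
    have hfix : ∀ τ ∈ H, IsSymplecticTransvection ω τ → ∀ w ∈ W, τ w = w := by
      intro τ hτ htr w hw
      by_contra hne
      obtain ⟨u, lam, hlam, hτu⟩ := exists_eq_Tmap ω hAlt hNd τ htr hne
      have hτw : τ w = w + (lam * ω w u) • u := by
        rw [← Tmap_apply_eq, ← hτu]; rfl
      have hc : lam * ω w u ≠ 0 := fun h0 => hne (by rw [hτw, h0]; simp)
      have hcu : (lam * ω w u) • u ∈ W := by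
        have := W.sub_mem (hWmem τ hτ w hw) hw
        rwa [hτw, add_sub_cancel_left] at this
      have huW : u ∈ W := (W.smul_mem_iff hc).1 hcu
      have hu : u ∈ Submodule.span K D := Submodule.subset_span ⟨huW, lam, hlam, τ, hτ, hτu⟩
      rw [hbot, Submodule.mem_bot] at hu
      exact hne (by rw [hτw, hu]; simp)
    obtain ⟨g, hg, w, hw, hgw⟩ := hnontriv
    have hall : ∀ g ∈ Subgroup.closure
        {τ : V ≃ₗ[K] V | τ ∈ H ∧ IsSymplecticTransvection ω τ}, ∀ w ∈ W, g w = w := by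
      intro g hg
      induction hg using Subgroup.closure_induction with
      | mem τ hτ => exact hfix τ hτ.1 hτ.2
      | one => exact fun w _ => rfl
      | mul a b _ _ ha hb =>
        intro w hw
        rw [LinearEquiv.mul_apply, hb w hw, ha w hw]
      | inv a _ ha =>
        intro w hw
        exact (LinearEquiv.symm_apply_eq a).2 (ha w hw).symm
    exact hgw (hall g (hgen.symm ▸ hg) w hw)
end

section
/- Let K be a field, V a symplectic K-vector space, H ≤ Sp(V) a subgroup, and W, W̃ ⊆ V two H-stable subspaces with W ∩ W̃ = 0. Assume that W is spanned by the set D = {u ∈ W : T_u[λ] ∈ H for some λ ∈ K×}. Then W ⊆ W̃^⊥. If moreover W ≠ 0 and the restriction of the symplectic form to W is nondegenerate, then W and W̃ are not isomorphic as K[H]-modules. -/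
/-!
For `x ∈ W̃` and a transvection `T_u[λ] ∈ H` with `u ∈ W`, the vector `T_u[λ] x - x = λ ⟨x, u⟩ u` lies in
`W̃ ∩ W = 0`, so `⟨x, u⟩ = 0` (`form_eq_zero_of_transvection_mem`). As such `u` span `W`, this gives
`W ≤ W̃^⊥`. In particular these transvections act trivially on `W̃`. An `H`-isomorphism `W ≃ W̃` would make
them act trivially on `W` too, forcing `⟨w, u⟩ = 0` for all `w ∈ W` (`form_eq_zero_of_smul_eq_zero`);
hence the form would vanish on `W`, which is impossible when it is nondegenerate there and `W ≠ 0`.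
-/

open Module

variable {K : Type*} [Field K] {V : Type*} [AddCommGroup V] [Module K V]

theorem Tmap_apply (ω : LinearMap.BilinForm K V) (u : V) (c : K) (x : V) :
    Tmap ω u c x = x + (c * ω x u) • u := by
  simp [Tmap, mul_smul]

/-- A transvection `T_u[c]` with `c ≠ 0` can only fix `x` if `x ⊥ u`; for `u = 0` this is trivial. -/
theorem form_eq_zero_of_smul_eq_zero (ω : LinearMap.BilinForm K V) {u x : V} {c : K}
    (hc : c ≠ 0) (h : (c * ω x u) • u = 0) : ω x u = 0 := by
  rcases smul_eq_zero.1 h with h | rfl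
  · exact (mul_eq_zero.1 h).resolve_left hc
  · simp

theorem form_eq_zero_of_transvection_mem (ω : LinearMap.BilinForm K V) {W N : Submodule K V}
    (hWN : W ⊓ N = ⊥) {u x : V} {c : K} (hc : c ≠ 0) (hu : u ∈ W) (hx : x ∈ N)
    (hT : Tmap ω u c x ∈ N) : ω x u = 0 := by
  refine form_eq_zero_of_smul_eq_zero ω hc ?_
  rw [Tmap_apply, N.add_mem_iff_right hx] at hT
  rw [← Submodule.mem_bot K, ← hWN]
  exact ⟨W.smul_mem _ hu, hT⟩

/-- **Lemma (orthogonality and non-isomorphy of constituents).**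
Let `H ≤ Sp(V)` and let `W, W̃ ⊆ V` be `H`-stable subspaces with `W ∩ W̃ = 0`. Assume `W` is
spanned by the directions `u ∈ W` of the transvections `T_u[λ] ∈ H`. Then `W ⊆ W̃^⊥`; and if
moreover `W ≠ 0` and the symplectic form is nondegenerate on `W`, then `W` and `W̃` are not
isomorphic as `K[H]`-modules. -/
theorem constituents_orthogonal_nonisomorphic
    {K : Type*} [Field K] {V : Type*} [AddCommGroup V] [Module K V]
    (ω : LinearMap.BilinForm K V) (hAlt : ω.IsAlt) (hNd : ω.Nondegenerate)
    (H : Subgroup (V ≃ₗ[K] V)) (hHSp : ∀ g ∈ H, IsSp ω g)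
    (W Wt : Submodule K V)
    (hWstab : ∀ g ∈ H, W.map (g : V →ₗ[K] V) = W)
    (hWtstab : ∀ g ∈ H, Wt.map (g : V →ₗ[K] V) = Wt)
    (hinter : W ⊓ Wt = ⊥)
    (hspan : Submodule.span K
      {u : V | u ∈ W ∧ ∃ lam : K, lam ≠ 0 ∧ ∃ τ ∈ H, (τ : V →ₗ[K] V) = Tmap ω u lam} = W) :
    W ≤ ω.orthogonal Wt ∧
    (W ≠ ⊥ → (∀ v ∈ W, (∀ w ∈ W, ω v w = 0) → v = 0) →
      ¬ ∃ e : ↥W ≃ₗ[K] ↥Wt, ∀ g ∈ H, ∀ w w' : ↥W,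
        g (w : V) = (w' : V) → g ((e w : V)) = ((e w' : V))) := by
  have hτ {τ : V ≃ₗ[K] V} {u : V} {c : K} (h : (τ : V →ₗ[K] V) = Tmap ω u c) (x : V) :
      τ x = x + (c * ω x u) • u := by
    rw [← Tmap_apply, ← h, LinearEquiv.coe_coe]
  have hD : ∀ u ∈ {u : V | u ∈ W ∧ ∃ lam : K, lam ≠ 0 ∧ ∃ τ ∈ H, (τ : V →ₗ[K] V) = Tmap ω u lam},
      ∀ x ∈ Wt, ω x u = 0 := by
    rintro u ⟨hu, c, hc, τ, hτH, hτu⟩ x hx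
    refine form_eq_zero_of_transvection_mem ω hinter hc hu hx ?_
    rw [← hτu, ← hWtstab τ hτH]
    exact Submodule.mem_map_of_mem hx
  constructor
  · rw [← hspan, Submodule.span_le]
    exact fun u hu x hx => hD u hu x hx
  · rintro hW hnd ⟨e, he⟩
    refine hW ((Submodule.eq_bot_iff _).2 fun w hw => hnd w hw ?_)
    have hle : W ≤ LinearMap.ker (ω w) := by
      conv_lhs => rw [← hspan]
      rw [Submodule.span_le]
      rintro u hu
      have hu0 := hD u hu
      obtain ⟨huW, c, hc, τ, hτH, hτu⟩ := hu
      let w₁ : W := ⟨w, hw⟩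
      let w₂ : W := ⟨w + (c * ω w u) • u, W.add_mem hw (W.smul_mem _ huW)⟩
      -- `w₂ = τ w₁`, while `τ` fixes `e w₁ ∈ W̃`; so `e w₂ = e w₁`.
      have h := he τ hτH w₁ w₂ (hτ hτu w)
      rw [hτ hτu, hu0 _ (e w₁).2, mul_zero, zero_smul, add_zero] at h
      have h' : w = w + (c * ω w u) • u := congrArg Subtype.val (e.injective (Subtype.ext h))
      exact form_eq_zero_of_smul_eq_zero ω hc (left_eq_add.1 h')
    exact fun v hv => hle hv
end

section
/- Let G be a group, N ⊴ G a normal subgroup, and H ≤ G a subgroup of finite index (G:H) ≤ n. Let p > n be a prime, K a field, and χ: N → K× a character whose order is pᵃ for some a ≥ 1 (i.e. the image of χ is cyclic of order pᵃ). Then the restriction of χ to H ∩ N is not the trivial character. -/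
/-!
Suppose `χ` is trivial on `H ∩ N`. By pigeonhole on the cosets of `H`, each `x ∈ N` has a power
`x ^ m` in `H` with `0 < m ≤ (G:H) < p`, so `χ x ^ m = 1`. Also `χ x ^ p ^ a = 1`, and `m` is
coprime to `p ^ a`, so `χ x = 1`. Hence `χ` is trivial, which contradicts its order being
`p ^ a > 1`.
-/

/-- **Lemma (nontriviality of the restricted character).**
Let `G` be a group, `N ⊴ G`, and `H ≤ G` of finite index `(G:H) ≤ n`. Let `p > n` be a prime,
`K` a field, and `χ : N → Kˣ` a character of order `pᵃ`, `a ≥ 1`. Then the restriction of `χ`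
to `H ∩ N` is not the trivial character. -/
theorem restricted_character_nontrivial
    {G : Type*} [Group G] (N : Subgroup G) (hN : N.Normal) (H : Subgroup G)
    {n : ℕ} (hfin : H.index ≠ 0) (hle : H.index ≤ n)
    {p : ℕ} (hp : p.Prime) (hpn : n < p)
    {K : Type*} [Field K]
    (χ : N →* Kˣ) {a : ℕ} (ha : 1 ≤ a) (hord : orderOf χ = p ^ a) :
    ∃ (x : G) (hx : x ∈ H ⊓ N), χ ⟨x, hx.2⟩ ≠ 1 := by
  by_contra! hcon
  have hχ : χ = 1 := by
    ext1 x
    obtain ⟨m, hm0, hm, hmem⟩ := Subgroup.exists_pow_mem_of_index_ne_zero hfin (x : G)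
    have hm1 : χ x ^ m = 1 := by
      rw [← map_pow]
      exact hcon ((x : G) ^ m) ⟨hmem, N.pow_mem x.2 m⟩
    have hpa : χ x ^ p ^ a = 1 := by
      rw [← MonoidHom.pow_apply, ← hord, pow_orderOf_eq_one, MonoidHom.one_apply]
    have hcop : m.Coprime (p ^ a) :=
      (Nat.coprime_of_lt_prime hm0.ne' (by omega) hp).symm.pow_right a
    rw [MonoidHom.one_apply, ← orderOf_eq_one_iff]
    exact Nat.eq_one_of_dvd_coprimes hcop (orderOf_dvd_of_pow_eq_one hm1)
      (orderOf_dvd_of_pow_eq_one hpa)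
  rw [hχ, orderOf_one] at hord
  exact (Nat.one_lt_pow (by omega) hp.one_lt).ne hord
end

section
/- Let n, k ≥ 1 be integers and ℓ a prime with ℓ > k·n! + 1. Let r, s ≥ 1 be integers, and let c₀, …, c_{r−1} and d₀, …, d_{s−1} be integers in {0, 1, …, k} with c₀ ≠ d₀. Set b = c₀ + c₁ℓ + ⋯ + c_{r−1}ℓ^{r−1} and b' = d₀ + d₁ℓ + ⋯ + d_{s−1}ℓ^{s−1}. Then the integer C₀ = n!·((ℓ^{rs}−1)/(ℓ^{r}−1))·b − n!·((ℓ^{rs}−1)/(ℓ^{s}−1))·b' is nonzero and is not divisible by ℓ^{rs} − 1. -/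
/-!
`C0` is a difference `X - Y` of two terms of the same shape. As the digits are at most `k`,
`(ℓ - 1) * b ≤ k * (ℓ ^ r - 1)`, and multiplying by the geometric quotient shows
`(ℓ - 1) * X ≤ k * n! * (ℓ ^ (r * s) - 1)`; since `k * n! < ℓ - 1`, both terms lie in
`[0, ℓ ^ (r * s) - 1)` (`term_bounds`). Hence `|C0| < ℓ ^ (r * s) - 1`, and divisibility would
force `C0 = 0`. On the other hand `C0 ≡ n! * (c 0 - d 0)` modulo `ℓ` (`term_modEq`), and
`0 < |n! * (c 0 - d 0)| ≤ k * n! < ℓ`, so `C0 ≠ 0`.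
-/

/-- The quantity `C₀ = n!·((ℓ^{rs}−1)/(ℓ^{r}−1))·b − n!·((ℓ^{rs}−1)/(ℓ^{s}−1))·b'`, where
`b = c₀ + c₁ℓ + ⋯ + c_{r−1}ℓ^{r−1}`, `b' = d₀ + d₁ℓ + ⋯ + d_{s−1}ℓ^{s−1}`, and the two
geometric quotients are written out as `1 + ℓ^r + ⋯ + ℓ^{(s−1)r}` and
`1 + ℓ^s + ⋯ + ℓ^{(r−1)s}`. -/
def C0 (n ℓ r s : ℕ) (c d : ℕ → ℕ) : ℤ :=
  (n.factorial : ℤ) * (∑ i ∈ Finset.range s, (ℓ : ℤ) ^ (i * r)) *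
      (∑ i ∈ Finset.range r, (c i : ℤ) * (ℓ : ℤ) ^ i) -
    (n.factorial : ℤ) * (∑ i ∈ Finset.range r, (ℓ : ℤ) ^ (i * s)) *
      (∑ i ∈ Finset.range s, (d i : ℤ) * (ℓ : ℤ) ^ i)

theorem term_bounds {m k L : ℤ} (hm : 0 ≤ m) (hk : 0 ≤ k) (hL : m * k + 1 < L)
    {r s : ℕ} (hr : 1 ≤ r) (hs : 1 ≤ s) (c : ℕ → ℕ) (hc : ∀ i < r, (c i : ℤ) ≤ k) :
    0 ≤ m * (∑ i ∈ Finset.range s, L ^ (i * r)) * (∑ i ∈ Finset.range r, (c i : ℤ) * L ^ i) ∧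
    m * (∑ i ∈ Finset.range s, L ^ (i * r)) * (∑ i ∈ Finset.range r, (c i : ℤ) * L ^ i)
      < L ^ (r * s) - 1 := by
  have hmk : 0 ≤ m * k := mul_nonneg hm hk
  have hL0 : 0 ≤ L := by linarith
  have hL1 : 1 < L := by linarith
  have hA0 : 0 ≤ ∑ i ∈ Finset.range s, L ^ (i * r) :=
    Finset.sum_nonneg fun i _ => pow_nonneg hL0 _
  have hB0 : 0 ≤ ∑ i ∈ Finset.range r, (c i : ℤ) * L ^ i :=
    Finset.sum_nonneg fun i _ => mul_nonneg (Int.natCast_nonneg _) (pow_nonneg hL0 _)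
  have hA : (∑ i ∈ Finset.range s, L ^ (i * r)) * (L ^ r - 1) = L ^ (r * s) - 1 := by
    rw [pow_mul, ← geom_sum_mul (L ^ r)]
    simp only [← pow_mul, mul_comm r]
  have hB : (∑ i ∈ Finset.range r, (c i : ℤ) * L ^ i) * (L - 1) ≤ k * (L ^ r - 1) := by
    rw [← geom_sum_mul, ← mul_assoc, Finset.mul_sum]
    refine mul_le_mul_of_nonneg_right (Finset.sum_le_sum fun i hi => ?_) (by linarith)
    exact mul_le_mul_of_nonneg_right (hc i (Finset.mem_range.1 hi)) (pow_nonneg hL0 _)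
  have hpos : 0 < L ^ (r * s) - 1 := by
    have := one_lt_pow₀ hL1 (mul_pos hr hs).ne'
    linarith
  generalize (∑ i ∈ Finset.range s, L ^ (i * r)) = A at *
  generalize (∑ i ∈ Finset.range r, (c i : ℤ) * L ^ i) = B at *
  refine ⟨by positivity, lt_of_mul_lt_mul_right ?_ (by linarith : 0 ≤ L - 1)⟩
  calc m * A * B * (L - 1) = m * A * (B * (L - 1)) := by ring
    _ ≤ m * A * (k * (L ^ r - 1)) := mul_le_mul_of_nonneg_left hB (by positivity)
    _ = (m * k) * (L ^ (r * s) - 1) := by rw [← hA]; ring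
    _ < (L - 1) * (L ^ (r * s) - 1) := mul_lt_mul_of_pos_right (by linarith) hpos
    _ = _ := mul_comm _ _

/-- Only the lowest digit survives modulo the base, in each of the two factors. -/
theorem term_modEq (m L : ℤ) {r s : ℕ} (hr : 1 ≤ r) (hs : 1 ≤ s) (c : ℕ → ℕ) :
    m * (∑ i ∈ Finset.range s, L ^ (i * r)) * (∑ i ∈ Finset.range r, (c i : ℤ) * L ^ i)
      ≡ m * c 0 [ZMOD L] := by
  have hA : (∑ i ∈ Finset.range s, L ^ (i * r)) ≡ 1 [ZMOD L] := by
    obtain ⟨t, rfl⟩ := Nat.exists_eq_add_of_le' hs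
    rw [Finset.sum_range_succ', zero_mul, pow_zero]
    refine (Int.modEq_iff_dvd.2 ?_).symm
    rw [add_sub_cancel_right]
    exact Finset.dvd_sum fun i _ => dvd_pow_self L (Nat.mul_pos i.succ_pos hr).ne'
  have hB : (∑ i ∈ Finset.range r, (c i : ℤ) * L ^ i) ≡ c 0 [ZMOD L] := by
    obtain ⟨t, rfl⟩ := Nat.exists_eq_add_of_le' hr
    rw [Finset.sum_range_succ', pow_zero, mul_one]
    refine (Int.modEq_iff_dvd.2 ?_).symm
    rw [add_sub_cancel_right]
    exact Finset.dvd_sum fun i _ => (dvd_pow_self L i.succ_ne_zero).mul_left _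
  simpa using (hA.mul_left m).mul hB

/-- **Lemma (arithmetic core of the regularity lemma).**
Let `n, k ≥ 1`, `ℓ` a prime with `ℓ > k·n! + 1`, `r, s ≥ 1`, and let `c₀,…,c_{r−1}` and
`d₀,…,d_{s−1}` be integers in `{0,…,k}` with `c₀ ≠ d₀`. Then
`C₀ = n!·((ℓ^{rs}−1)/(ℓ^{r}−1))·b − n!·((ℓ^{rs}−1)/(ℓ^{s}−1))·b'` is nonzero and is not
divisible by `ℓ^{rs} − 1`. -/
theorem tame_inertia_weights_distinct
    {n k : ℕ} (hn : 1 ≤ n) (hk : 1 ≤ k)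
    {ℓ : ℕ} (hℓ : ℓ.Prime) (hbig : k * n.factorial + 1 < ℓ)
    {r s : ℕ} (hr : 1 ≤ r) (hs : 1 ≤ s)
    (c d : ℕ → ℕ) (hc : ∀ i < r, c i ≤ k) (hd : ∀ i < s, d i ≤ k)
    (hcd : c 0 ≠ d 0) :
    C0 n ℓ r s c d ≠ 0 ∧ ¬ ((ℓ : ℤ) ^ (r * s) - 1 ∣ C0 n ℓ r s c d) := by
  have hm : (0 : ℤ) < n.factorial := mod_cast n.factorial_pos
  have hk0 : (0 : ℤ) ≤ k := Int.natCast_nonneg k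
  have hL : (n.factorial : ℤ) * k + 1 < ℓ := by
    rw [mul_comm]; exact_mod_cast hbig
  obtain ⟨hX0, hX⟩ := term_bounds hm.le hk0 hL hr hs c (fun i hi => mod_cast hc i hi)
  obtain ⟨hY0, hY⟩ := term_bounds hm.le hk0 hL hs hr d (fun i hi => mod_cast hd i hi)
  rw [mul_comm s r] at hY
  have hne : C0 n ℓ r s c d ≠ 0 := by
    intro h0
    have hmod := (term_modEq n.factorial ℓ hr hs c).sub (term_modEq n.factorial ℓ hs hr d)
    change C0 n ℓ r s c d ≡ _ [ZMOD ℓ] at hmod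
    rw [h0, ← mul_sub] at hmod
    have hdvd : (ℓ : ℤ) ∣ n.factorial * ((c 0 : ℤ) - d 0) := by
      simpa using Int.modEq_iff_dvd.1 hmod
    have hcd' : |(c 0 : ℤ) - d 0| ≤ k := by
      have h1 := hc 0 hr
      have h2 := hd 0 hs
      rw [abs_le]; constructor <;> omega
    have hlt : |(n.factorial : ℤ) * ((c 0 : ℤ) - d 0)| < ℓ := by
      rw [abs_mul, abs_of_pos hm]
      have := mul_le_mul_of_nonneg_left hcd' hm.le
      linarith
    rcases mul_eq_zero.1 (Int.eq_zero_of_abs_lt_dvd hdvd hlt) with h | h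
    · exact hm.ne' h
    · exact hcd (by omega)
  refine ⟨hne, fun hdvd => hne (Int.eq_zero_of_abs_lt_dvd hdvd ?_)⟩
  unfold C0
  rw [abs_lt]
  constructor <;> linarith
end
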